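/- Let G be a finite unweighted forest (a graph with no cycles) without isolated vertices. Then for every k = 1,…,n, the k-th min-max eigenvalue c_k of the signless 1-Laplacian Δ₁⁺ satisfies c_k = 1 − h⁺_k, where h⁺_k is the k-way dual Cheeger constant. -/

import Mathlib

open Finset

noncomputable section

/-- The set-valued sign function: `{1}` if `t > 0`, `{-1}` if `t < 0`, `[-1,1]` if `t = 0`. -/
def Sgn (t : ℝ) : Set ℝ := if 0 < t then {1} else if t < 0 then {-1} else Set.Icc (-1) 1

variable {n : ℕ}

/-- The degree `d_i` of vertex `i` (unit edge weights), as a real number. -/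
def degR (G : SimpleGraph (Fin n)) [DecidableRel G.Adj] (i : Fin n) : ℝ := (G.degree i : ℝ)

/-- `vol(V) = Σ_i d_i`. -/
def volV (G : SimpleGraph (Fin n)) [DecidableRel G.Adj] : ℝ := ∑ i, degR G i

/-- `I⁺(x) = Σ_{{i,j} ∈ E} |x_i + x_j|`. -/
def IplusU (G : SimpleGraph (Fin n)) [DecidableRel G.Adj] (x : Fin n → ℝ) : ℝ :=
  (∑ i, ∑ j, if G.Adj i j then |x i + x j| else 0) / 2

/-- `(λ, x)` with `x ≠ 0` is an eigenpair of the signless 1-Laplacian `Δ₁⁺`: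
there are `z_{ij} ∈ Sgn(x_i + x_j)` with `z_{ij} = z_{ji}` and `v_i ∈ Sgn(x_i)` such that
`Σ_{j ∼ i} z_{ij} = λ d_i v_i` for all `i`. -/
def IsEigenSignless (G : SimpleGraph (Fin n)) [DecidableRel G.Adj]
    (lam : ℝ) (x : Fin n → ℝ) : Prop :=
  x ≠ 0 ∧ ∃ z : Fin n → Fin n → ℝ,
    (∀ i j, G.Adj i j → z i j ∈ Sgn (x i + x j)) ∧
    (∀ i j, z i j = z j i) ∧
    ∃ v : Fin n → ℝ, (∀ i, v i ∈ Sgn (x i)) ∧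
      ∀ i, (∑ j, if G.Adj i j then z i j else 0) = lam * degR G i * v i

/-- `D` is the vertex set of a connected component of the subgraph of `G` induced by `P`. -/
def IsCompIn (G : SimpleGraph (Fin n)) (P : Set (Fin n)) (D : Set (Fin n)) : Prop :=
  ∃ v ∈ P, D = {u | Relation.ReflTransGen (fun a b => G.Adj a b ∧ a ∈ P ∧ b ∈ P) v u}

/-- The number `S(x)` of nodal domains of `x`: connected components of the support. -/
def nodalCount (G : SimpleGraph (Fin n)) (x : Fin n → ℝ) : ℕ :=
  Set.ncard {D : Set (Fin n) | IsCompIn G {i | x i ≠ 0} D}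

/-- There is a continuous odd nonvanishing map from `A` into `ℝᵐ ∖ {0}`. -/
def HasOddMap (A : Set (Fin n → ℝ)) (m : ℕ) : Prop :=
  ∃ f : (Fin n → ℝ) → (Fin m → ℝ),
    ContinuousOn f A ∧ (∀ x ∈ A, f (-x) = -f x) ∧ ∀ x ∈ A, f x ≠ 0

/-- `γ(A) ≥ k`, where `γ` is the Krasnoselskii genus: the least `m` admitting a
continuous odd nonvanishing map `A → ℝᵐ ∖ {0}` (with `γ(∅) = 0`, `γ(A) = +∞` if none). -/
def GenusGe (A : Set (Fin n → ℝ)) (k : ℕ) : Prop := ∀ m, HasOddMap A m → k ≤ m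

/-- The `k`-th min-max value of a functional `Φ`:
`inf { sup_{x ∈ A} Φ(x) : A ⊆ ℝⁿ∖{0} symmetric compact, γ(A) ≥ k }`. -/
def minimaxVal (Phi : (Fin n → ℝ) → ℝ) (k : ℕ) : ℝ :=
  sInf {r : ℝ | ∃ A : Set (Fin n → ℝ), IsCompact A ∧ (∀ x ∈ A, -x ∈ A) ∧
    (0 : Fin n → ℝ) ∉ A ∧ GenusGe A k ∧ r = sSup (Phi '' A)}

/-- The Rayleigh quotient `I⁺(x) / Σ_i d_i |x_i|` of the signless 1-Laplacian. -/
def RayleighPlus (G : SimpleGraph (Fin n)) [DecidableRel G.Adj] (x : Fin n → ℝ) : ℝ :=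
  IplusU G x / ∑ i, degR G i * |x i|

/-- The `k`-th min-max eigenvalue `c_k` of the (normalized) signless 1-Laplacian `Δ₁⁺`. -/
def ckSignless (G : SimpleGraph (Fin n)) [DecidableRel G.Adj] (k : ℕ) : ℝ :=
  minimaxVal (RayleighPlus G) k

/-- `|E(A,B)|`: number of edges with one endpoint in `A` and the other in `B`
(each crossing edge counted once when `A` and `B` are disjoint). -/
def cutE (G : SimpleGraph (Fin n)) [DecidableRel G.Adj] (A B : Finset (Fin n)) : ℝ :=
  ∑ i ∈ A, ∑ j ∈ B, if G.Adj i j then (1 : ℝ) else 0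

/-- `vol(A) = Σ_{i ∈ A} d_i`. -/
def volF (G : SimpleGraph (Fin n)) [DecidableRel G.Adj] (A : Finset (Fin n)) : ℝ :=
  ∑ i ∈ A, degR G i

/-- The `k`-way dual Cheeger constant `h⁺_k`: the maximum over `2k` pairwise disjoint
subsets `V₁,…,V_{2k}` with `V_{2i-1} ∪ V_{2i} ≠ ∅` of
`min_i 2|E(V_{2i-1},V_{2i})| / vol(V_{2i-1} ∪ V_{2i})`. -/
def dualCheeger (G : SimpleGraph (Fin n)) [DecidableRel G.Adj] (k : ℕ) : ℝ :=
  sSup {r : ℝ | ∃ P Q : Fin k → Finset (Fin n),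
    (∀ i, Disjoint (P i) (Q i)) ∧
    (∀ i j, i ≠ j → Disjoint (P i ∪ Q i) (P j ∪ Q j)) ∧
    (∀ i, (P i ∪ Q i).Nonempty) ∧
    r = ⨅ i, 2 * cutE G (P i) (Q i) / volF G (P i ∪ Q i)}

/-
Upper bound: the signed indicators of an admissible family `(V₁, V₂), …, (V₂ₖ₋₁, V₂ₖ)` span a
`k`-dimensional space, whose unit sphere has genus at least `k` by the Borsuk–Ulam theorem. On this
space the Rayleigh quotient is at most its largest value on the spanning vectors, by convexity of
`I⁺` and disjointness of the supports, and that value is `1 - minᵢ 2|E(V₂ᵢ₋₁, V₂ᵢ)| / vol`. The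
Borsuk–Ulam theorem follows from Tucker's lemma on Kuhn's triangulation of the cube, proved by the
parity argument of Freund and Todd.

Lower bound: a forest is bipartite, and switching signs on one colour class turns `I⁺` into the
total variation. Let `h` be the dual Cheeger constant. By the coarea formula, the total variation
minus `(1 - h)` times the weighted norm is nonnegative on all functions vanishing on a vertex set
`T` once it is nonnegative on the indicators of the connected sets avoiding `T`. In a forest, a
family of connected sets contains `k` disjoint members or is pierced by fewer than `k` vertices.
Among `k` disjoint connected sets the definition of `h` provides one with nonnegative value, so
fewer than `k` vertices pierce all sets of negative value, and a set of genus at least `k` contains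
a vector vanishing at these vertices.
-/

section Kuhn

variable {ι : Type*} {σ τ : Finset (ι → ℤ)} {p q l u : ι → ℤ} {i j : ι}

/-- The vertex sets of the simplices of Kuhn's triangulation of `ℝ^ι`: chains of lattice points
any two of which differ by at most one in every coordinate. The empty set is included. -/
def IsKuhn (σ : Finset (ι → ℤ)) : Prop :=
  (∀ p ∈ σ, ∀ q ∈ σ, p ≤ q ∨ q ≤ p) ∧ ∀ p ∈ σ, ∀ q ∈ σ, q ≤ p + 1

namespace IsKuhn

lemma singleton (p : ι → ℤ) : IsKuhn {p} := by
  refine ⟨?_, ?_⟩ <;> simp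

lemma subset (hτ : IsKuhn τ) (h : σ ⊆ τ) : IsKuhn σ :=
  ⟨fun p hp q hq => hτ.1 p (h hp) q (h hq), fun p hp q hq => hτ.2 p (h hp) q (h hq)⟩

lemma insert [DecidableEq (ι → ℤ)] (hσ : IsKuhn σ) (hcomp : ∀ q ∈ σ, p ≤ q ∨ q ≤ p)
    (hp : ∀ q ∈ σ, p ≤ q + 1) (hq : ∀ q ∈ σ, q ≤ p + 1) : IsKuhn (insert p σ) := by
  have hpp : p ≤ p + 1 := le_add_of_nonneg_right zero_le_one
  simp only [IsKuhn, mem_insert, forall_eq_or_imp]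
  exact ⟨⟨⟨Or.inl le_rfl, hcomp⟩, fun q h => ⟨(hcomp q h).symm, hσ.1 q h⟩⟩, ⟨hpp, hq⟩,
    fun q h => ⟨hp q h, hσ.2 q h⟩⟩

lemma image_neg [DecidableEq (ι → ℤ)] (hσ : IsKuhn σ) : IsKuhn (σ.image Neg.neg) := by
  simp only [IsKuhn, forall_mem_image]
  refine ⟨fun p hp q hq => by simpa using hσ.1 q hq p hp, fun p hp q hq => ?_⟩
  simpa [neg_add_eq_sub] using neg_add_le_iff_le_add.2 (hσ.2 q hq p hp)

lemma exists_isLeast (hσ : IsKuhn σ) (hne : σ.Nonempty) : ∃ l, IsLeast (σ : Set (ι → ℤ)) l := by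
  obtain ⟨l, hl⟩ := σ.exists_minimal hne
  exact ⟨l, hl.1, fun q hq => (hσ.1 l hl.1 q hq).elim id (hl.2 hq)⟩

lemma exists_isGreatest (hσ : IsKuhn σ) (hne : σ.Nonempty) :
    ∃ u, IsGreatest (σ : Set (ι → ℤ)) u := by
  obtain ⟨u, hu⟩ := σ.exists_maximal hne
  exact ⟨u, hu.1, fun q hq => (hσ.1 q hq u hu.1).elim id (hu.2 hq)⟩

lemma greatest_eq_least_add_one (hσ : IsKuhn σ) (hl : IsLeast (σ : Set (ι → ℤ)) l)
    (hu : IsGreatest (σ : Set (ι → ℤ)) u) (hne : ∃ p ∈ σ, ∃ q ∈ σ, p j ≠ q j) :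
    u j = l j + 1 := by
  obtain ⟨p, hp, q, hq, hpq⟩ := hne
  have h1 : u j ≤ l j + 1 := hσ.2 l hl.1 u hu.1 j
  have h2 : l j ≤ p j := hl.2 hp j
  have h3 : l j ≤ q j := hl.2 hq j
  have h4 : p j ≤ u j := hu.2 hp j
  have h5 : q j ≤ u j := hu.2 hq j
  omega

end IsKuhn

section Level

variable [Fintype ι]

/-- The sum of the coordinates of a lattice point, which orders the vertices of a Kuhn simplex. -/
def level (p : ι → ℤ) : ℤ := ∑ i, p i

lemma level_strictMono : StrictMono (level : (ι → ℤ) → ℤ) := Fintype.sum_strictMono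

namespace IsKuhn

lemma le_of_level_le (hσ : IsKuhn σ) (hp : p ∈ σ) (hq : q ∈ σ) (h : level p ≤ level q) :
    p ≤ q := by
  rcases hσ.1 p hp q hq with hpq | hqp
  · exact hpq
  · exact (eq_of_le_of_not_lt hqp fun hlt => (level_strictMono hlt).not_ge h).ge

lemma level_injOn (hσ : IsKuhn σ) : Set.InjOn level (σ : Set (ι → ℤ)) := fun _ hp _ hq h =>
  (hσ.le_of_level_le hp hq h.le).antisymm (hσ.le_of_level_le hq hp h.ge)

end IsKuhn

end Level

lemma IsKuhn.card_le_card_add_one [Finite ι] (hσ : IsKuhn σ) {T : Finset ι}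
    (hT : ∀ i ∉ T, ∀ p ∈ σ, ∀ q ∈ σ, p i = q i) : #σ ≤ #T + 1 := by
  classical
  cases nonempty_fintype ι
  obtain rfl | hne := σ.eq_empty_or_nonempty
  · simp
  obtain ⟨l, hl, hmin⟩ := hσ.exists_isLeast hne
  have hlevel : ∀ p ∈ σ, level p ∈ Icc (level l) (level l + #T) := fun p hp => by
    refine mem_Icc.2 ⟨level_strictMono.monotone (hmin hp), ?_⟩
    calc level p ≤ ∑ i, (l i + if i ∈ T then 1 else 0) := sum_le_sum fun i _ => by
          split_ifs with hi
          · exact hσ.2 l hl p hp i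
          · simp [hT i hi p hp l hl]
      _ = level l + #T := by simp [level, sum_add_distrib]
  have h := card_le_card_of_injOn level hlevel hσ.level_injOn
  rw [Int.card_Icc] at h
  omega

variable [Fintype ι] [DecidableEq ι]

open scoped Classical in
/-- The lattice points of the box `[a, b]` which extend the simplex `σ` by one vertex. -/
def extVertices (a b : ι → ℤ) (σ : Finset (ι → ℤ)) : Finset (ι → ℤ) :=
  {p ∈ Icc a b | p ∉ σ ∧ IsKuhn (insert p σ)}

variable {a b : ι → ℤ}

lemma mem_extVertices : p ∈ extVertices a b σ ↔ p ∈ Icc a b ∧ p ∉ σ ∧ IsKuhn (insert p σ) := by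
  simp [extVertices]

lemma neg_mem_extVertices :
    -p ∈ extVertices (-b) (-a) (σ.image Neg.neg) ↔ p ∈ extVertices a b σ := by
  have hK : IsKuhn ((insert p σ).image Neg.neg) ↔ IsKuhn (insert p σ) :=
    ⟨fun h => by simpa [image_image] using h.image_neg, fun h => h.image_neg⟩
  rw [image_insert] at hK
  simp only [mem_extVertices, mem_Icc, neg_le_neg_iff, hK, mem_image, neg_inj, exists_eq_right]
  tauto

lemma eq_of_mem_Icc_of_eq (hp : p ∈ Icc a b) (hi : a i = b i) : p i = b i :=
  ((mem_Icc.1 hp).2 i).antisymm (hi.ge.trans ((mem_Icc.1 hp).1 i))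

section Facet

variable {T : Finset ι} (hT : ∀ i ∉ T, a i = b i) (hσ : IsKuhn σ) (hbox : σ ⊆ Icc a b)
  (hcard : #σ = #T)
include hT hσ hbox hcard

lemma exists_ne_of_const {c : ℤ} (hi : i ∈ T) (hc : ∀ p ∈ σ, p i = c) (hj : j ∈ T) (hji : j ≠ i) :
    ∃ p ∈ σ, ∃ q ∈ σ, p j ≠ q j := by
  by_contra! hconst
  have h := hσ.card_le_card_add_one (T := (T.erase i).erase j) fun m hm p hp q hq => by
    by_cases hmj : m = j
    · rw [hmj, hconst p hp q hq]
    by_cases hmi : m = i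
    · rw [hmi, hc p hp, hc q hq]
    have hmT := hT m (by simpa [hmi, hmj] using hm)
    rw [eq_of_mem_Icc_of_eq (hbox hp) hmT, eq_of_mem_Icc_of_eq (hbox hq) hmT]
  have hji' := mem_erase.2 ⟨hji, hj⟩
  have hpos := card_pos.2 ⟨j, hji'⟩
  rw [card_erase_of_mem hji'] at h
  rw [card_erase_of_mem hi] at h hpos
  omega

lemma card_extVertices_gt {c : ℤ} (hne : σ.Nonempty) (hi : i ∈ T) (hc : ∀ p ∈ σ, p i = c) :
    #{p ∈ extVertices a b σ | c < p i} = if c < b i then 1 else 0 := by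
  obtain ⟨l, hl⟩ := hσ.exists_isLeast hne
  obtain ⟨u, hu⟩ := hσ.exists_isGreatest hne
  have hule : ∀ j ≠ i, j ∈ T → u j = l j + 1 := fun j hji hj =>
    hσ.greatest_eq_least_add_one hl hu (exists_ne_of_const hT hσ hbox hcard hi hc hj hji)
  have hunique : ∀ p ∈ extVertices a b σ, c < p i → p = Function.update u i (c + 1) := by
    intro p hp hpi
    obtain ⟨hpbox, -, hK⟩ := mem_extVertices.1 hp
    have hup : u ≤ p := (hK.1 u (mem_insert_of_mem hu.1) p (mem_insert_self _ _)).resolve_right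
      fun hpu => hpi.not_ge ((hpu i).trans (hc u hu.1).le)
    have hpl : p ≤ l + 1 := hK.2 l (mem_insert_of_mem hl.1) p (mem_insert_self _ _)
    refine Function.eq_update_iff.2 ⟨?_, fun j hji => ?_⟩
    · have h : p i ≤ l i + 1 := hpl i
      rw [hc l hl.1] at h
      omega
    · by_cases hj : j ∈ T
      · exact ((hpl j).trans (hule j hji hj).ge).antisymm (hup j)
      · rw [eq_of_mem_Icc_of_eq hpbox (hT j hj), eq_of_mem_Icc_of_eq (hbox hu.1) (hT j hj)]
  have hext : c < b i → Function.update u i (c + 1) ∈ extVertices a b σ := by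
    intro hcb
    have hub := mem_Icc.1 (hbox hu.1)
    have hle : u ≤ Function.update u i (c + 1) := le_update_self_iff.2 (by rw [hc u hu.1]; omega)
    refine mem_extVertices.2
      ⟨mem_Icc.2 ⟨hub.1.trans hle, update_le_iff.2 ⟨hcb, fun j _ => hub.2 j⟩⟩,
      fun hmem => by simpa using hc _ hmem,
      hσ.insert (fun q hq => Or.inr ((hu.2 hq).trans hle))
      (fun q hq => update_le_iff.2 ⟨?_, fun j _ => hσ.2 q hq u hu.1 j⟩)
      fun q hq => (hu.2 hq).trans (hle.trans (le_add_of_nonneg_right zero_le_one))⟩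
    simp [hc q hq]
  split_ifs with hcb
  · refine card_eq_one.2 ⟨Function.update u i (c + 1), eq_singleton_iff_unique_mem.2
      ⟨mem_filter.2 ⟨hext hcb, by simp⟩, fun p hp => ?_⟩⟩
    exact hunique p (mem_filter.1 hp).1 (mem_filter.1 hp).2
  · refine card_eq_zero.2 (filter_eq_empty_iff.2 fun p hp hpi => hcb ?_)
    exact hpi.trans_le ((mem_Icc.1 (mem_extVertices.1 hp).1).2 i)

lemma card_extVertices_lt {c : ℤ} (hne : σ.Nonempty) (hi : i ∈ T) (hc : ∀ p ∈ σ, p i = c) :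
    #{p ∈ extVertices a b σ | p i < c} = if a i < c then 1 else 0 := by
  have h := card_extVertices_gt (σ := σ.image Neg.neg) (a := -b) (b := -a) (i := i) (c := -c)
    (fun j hj => by simp [hT j hj]) hσ.image_neg
    (image_subset_iff.2 fun p hp => by simpa [and_comm] using hbox hp)
    (by rw [card_image_of_injective _ neg_injective, hcard]) (hne.image _) hi (by simpa using hc)
  simp only [Pi.neg_apply, neg_lt_neg_iff] at h
  rw [← h]
  refine card_nbij' Neg.neg Neg.neg ?_ ?_ (fun p _ => neg_neg p) fun p _ => neg_neg p
  · intro p hp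
    simpa [neg_mem_extVertices] using hp
  · intro p hp
    rw [← neg_neg p] at hp
    generalize -p = q at hp ⊢
    simpa [neg_mem_extVertices] using hp

lemma card_extVertices_of_const {c : ℤ} (hne : σ.Nonempty) (hi : i ∈ T)
    (hc : ∀ p ∈ σ, p i = c) :
    #(extVertices a b σ) = (if a i < c then 1 else 0) + if c < b i then 1 else 0 := by
  have hmoves : ∀ p ∈ extVertices a b σ, ¬ p i < c ↔ c < p i := by
    intro p hp
    obtain ⟨hpbox, hpσ, hK⟩ := mem_extVertices.1 hp
    refine ⟨fun h => (not_lt.1 h).lt_of_ne' fun hpc => ?_, fun h => h.not_gt⟩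
    have hconst : ∀ q ∈ insert p σ, q i = c := by simpa [hpc] using hc
    have hle := hK.card_le_card_add_one (T := T.erase i) fun m hm q hq r hr => by
      by_cases hmi : m = i
      · rw [hmi, hconst q hq, hconst r hr]
      have hmT := hT m (by simpa [hmi] using hm)
      have hsub := insert_subset hpbox hbox
      rw [eq_of_mem_Icc_of_eq (hsub hq) hmT, eq_of_mem_Icc_of_eq (hsub hr) hmT]
    have := card_pos.2 ⟨i, hi⟩
    rw [card_insert_of_notMem hpσ, card_erase_of_mem hi] at hle
    omega
  rw [← card_filter_add_card_filter_not (fun p => p i < c), filter_congr hmoves,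
    card_extVertices_lt hT hσ hbox hcard hne hi hc, card_extVertices_gt hT hσ hbox hcard hne hi hc]

end Facet

lemma card_Ioo_of_level_eq_add_two {v w : ι → ℤ} (hvw : v ≤ w) (hwv : w ≤ v + 1)
    (hlevel : level w = level v + 2) : #(Ioo v w) = 2 := by
  have hI : #(Icc v w) = 2 ^ (∑ i, (w i - v i).toNat) := by
    rw [Pi.card_Icc, ← prod_pow_eq_pow_sum]
    refine prod_congr rfl fun i _ => ?_
    have h1 : v i ≤ w i := hvw i
    have h2 : w i ≤ v i + 1 := hwv i
    obtain h | h : w i = v i ∨ w i = v i + 1 := by omega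
    · simp [h]
    · simp [h, add_sub_right_comm]
  have hsum : ∑ i, (w i - v i).toNat = 2 := by
    zify
    rw [sum_congr rfl fun i _ => Int.toNat_of_nonneg (sub_nonneg.2 (hvw i)), sum_sub_distrib]
    simp only [level] at hlevel
    omega
  rw [card_Ioo_eq_card_Icc_sub_two, hI, hsum]
  norm_num

section Facet

variable {T : Finset ι} (hT : ∀ i ∉ T, a i = b i) (hσ : IsKuhn σ) (hbox : σ ⊆ Icc a b)
  (hcard : #σ = #T) (hl : IsLeast (σ : Set (ι → ℤ)) l) (hu : IsGreatest (σ : Set (ι → ℤ)) u)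
  (hmoves : ∀ i ∈ T, ∃ p ∈ σ, ∃ q ∈ σ, p i ≠ q i)
include hT hσ hbox hl hu hmoves

lemma level_greatest : level u = level l + #T := by
  have hj : ∀ j, u j = l j + if j ∈ T then 1 else 0 := fun j => by
    split_ifs with h
    · exact hσ.greatest_eq_least_add_one hl hu (hmoves j h)
    · rw [add_zero, eq_of_mem_Icc_of_eq (hbox hu.1) (hT j h),
        eq_of_mem_Icc_of_eq (hbox hl.1) (hT j h)]
  rw [level, sum_congr rfl fun j _ => hj j, sum_add_distrib, level]
  simp

lemma mem_Icc_of_mem_extVertices (hp : p ∈ extVertices a b σ) : p ∈ Icc l u := by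
  obtain ⟨hpbox, -, hK⟩ := mem_extVertices.1 hp
  have hlmem := mem_insert_of_mem (b := p) hl.1
  have humem := mem_insert_of_mem (b := p) hu.1
  have hpmem := mem_insert_self p σ
  have huj : ∀ j, (j ∈ T ∧ u j = l j + 1) ∨ (p j = u j ∧ p j = l j) := fun j => by
    by_cases hj : j ∈ T
    · exact Or.inl ⟨hj, hσ.greatest_eq_least_add_one hl hu (hmoves j hj)⟩
    · exact Or.inr ⟨
        (eq_of_mem_Icc_of_eq hpbox (hT j hj)).trans
          (eq_of_mem_Icc_of_eq (hbox hu.1) (hT j hj)).symm,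
        (eq_of_mem_Icc_of_eq hpbox (hT j hj)).trans
          (eq_of_mem_Icc_of_eq (hbox hl.1) (hT j hj)).symm⟩
  have hup : ∀ j, u j ≤ p j + 1 := hK.2 p hpmem u humem
  have hpl : ∀ j, p j ≤ l j + 1 := hK.2 l hlmem p hpmem
  refine mem_Icc.2 ⟨fun j => show l j ≤ p j from ?_, fun j => show p j ≤ u j from ?_⟩
  · have h := hup j
    rcases huj j with h' | h' <;> omega
  · have h := hpl j
    rcases huj j with h' | h' <;> omega

include hcard

lemma exists_unique_gap : ∃ v ∈ σ, ∃ w ∈ σ, level w = level v + 2 ∧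
    ∀ r, level l ≤ r → r ≤ level u → (r ∉ σ.image level ↔ r = level v + 1) := by
  have hsub : σ.image level ⊆ Icc (level l) (level u) := image_subset_iff.2 fun p hp =>
    mem_Icc.2 ⟨level_strictMono.monotone (hl.2 hp), level_strictMono.monotone (hu.2 hp)⟩
  have hone : #(Icc (level l) (level u) \ σ.image level) = 1 := by
    rw [card_sdiff_of_subset hsub, card_image_of_injOn hσ.level_injOn, Int.card_Icc,
      level_greatest hT hσ hbox hl hu hmoves, hcard]
    omega
  obtain ⟨ρ, hρ⟩ := card_eq_one.1 hone
  have hgap : ∀ r, level l ≤ r → r ≤ level u → (r ∉ σ.image level ↔ r = ρ) := fun r h1 h2 => by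
    rw [← mem_singleton, ← hρ, mem_sdiff, mem_Icc, and_iff_right ⟨h1, h2⟩]
  obtain ⟨hIcc, hnot⟩ := mem_sdiff.1 (hρ.ge (mem_singleton_self ρ))
  obtain ⟨h1, h2⟩ := mem_Icc.1 hIcc
  have hlρ : level l ≠ ρ := fun h => hnot (h ▸ mem_image_of_mem level hl.1)
  have hρu : level u ≠ ρ := fun h => hnot (h ▸ mem_image_of_mem level hu.1)
  have hattained : ∀ r, level l ≤ r → r ≤ level u → r ≠ ρ → ∃ p ∈ σ, level p = r :=
    fun r h1 h2 h3 => mem_image.1 (not_not.1 (mt (hgap r h1 h2).1 h3))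
  obtain ⟨v, hv, hvρ⟩ := hattained (ρ - 1) (by omega) (by omega) (by omega)
  obtain ⟨w, hw, hwρ⟩ := hattained (ρ + 1) (by omega) (by omega) (by omega)
  refine ⟨v, hv, w, hw, by omega, ?_⟩
  rwa [show level v + 1 = ρ by omega]

lemma card_extVertices_of_forall_ne : #(extVertices a b σ) = 2 := by
  obtain ⟨v, hv, w, hw, hvw, hgap⟩ := exists_unique_gap hT hσ hbox hcard hl hu hmoves
  suffices hIoo : extVertices a b σ = Ioo v w by
    rw [hIoo]
    exact card_Ioo_of_level_eq_add_two (hσ.le_of_level_le hv hw (by omega)) (hσ.2 v hv w hw) hvw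
  ext p
  refine ⟨fun hp => ?_, fun hp => ?_⟩
  · have hIcc := mem_Icc.1 (mem_Icc_of_mem_extVertices hT hσ hbox hl hu hmoves hp)
    obtain ⟨-, hpσ, hK⟩ := mem_extVertices.1 hp
    have hpmem := mem_insert_self p σ
    have hplevel : level p = level v + 1 := by
      refine (hgap _ (level_strictMono.monotone hIcc.1) (level_strictMono.monotone hIcc.2)).1 ?_
      rintro hmem
      obtain ⟨q, hq, hqp⟩ := mem_image.1 hmem
      exact hpσ (hK.level_injOn (mem_insert_of_mem hq) hpmem hqp ▸ hq)
    exact mem_Ioo.2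
      ⟨(hK.le_of_level_le (mem_insert_of_mem hv) hpmem (by omega)).lt_of_ne
        (ne_of_mem_of_not_mem hv hpσ),
      (hK.le_of_level_le hpmem (mem_insert_of_mem hw) (by omega)).lt_of_ne
        (ne_of_mem_of_not_mem hw hpσ).symm⟩
  · obtain ⟨hvp, hpw⟩ := mem_Ioo.1 hp
    have hlt₁ := level_strictMono hvp
    have hlt₂ := level_strictMono hpw
    have hlevels : ∀ q ∈ σ, level w ≤ level q ∨ level q ≤ level v := fun q hq => by
      have := mt (hgap _ (level_strictMono.monotone (hl.2 hq))
        (level_strictMono.monotone (hu.2 hq))).2 (not_not.2 (mem_image_of_mem level hq))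
      omega
    refine mem_extVertices.2 ⟨mem_Icc.2 ⟨(mem_Icc.1 (hbox hv)).1.trans hvp.le,
      hpw.le.trans (mem_Icc.1 (hbox hw)).2⟩, fun hpσ => ?_, hσ.insert (fun q hq => ?_)
      (fun q hq => hpw.le.trans (hσ.2 q hq w hw))
      fun q hq => (hσ.2 v hv q hq).trans (add_le_add_left hvp.le 1)⟩
    · have := hlevels p hpσ
      omega
    · exact (hlevels q hq).imp (fun h => hpw.le.trans (hσ.le_of_level_le hw hq h))
        fun h => (hσ.le_of_level_le hq hv h).trans hvp.le

end Facet

theorem IsKuhn.odd_card_extVertices_iff {T : Finset ι} (hT : ∀ i ∉ T, a i = b i)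
    (hTlt : ∀ i ∈ T, a i < b i) (hσ : IsKuhn σ) (hbox : σ ⊆ Icc a b) (hcard : #σ = #T)
    (hne : σ.Nonempty) :
    Odd #(extVertices a b σ) ↔ ∃ i ∈ T, (∀ p ∈ σ, p i = a i) ∨ ∀ p ∈ σ, p i = b i := by
  obtain ⟨l, hl⟩ := hσ.exists_isLeast hne
  by_cases hmoves : ∀ i ∈ T, ∃ p ∈ σ, ∃ q ∈ σ, p i ≠ q i
  · obtain ⟨u, hu⟩ := hσ.exists_isGreatest hne
    rw [card_extVertices_of_forall_ne hT hσ hbox hcard hl hu hmoves]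
    refine iff_of_false (by decide) ?_
    rintro ⟨i, hi, h⟩
    obtain ⟨p, hp, q, hq, hpq⟩ := hmoves i hi
    exact h.elim (fun h => hpq (by rw [h p hp, h q hq])) fun h => hpq (by rw [h p hp, h q hq])
  · push Not at hmoves
    obtain ⟨i, hi, hconst⟩ := hmoves
    have hc : ∀ p ∈ σ, p i = l i := fun p hp => hconst p hp l hl.1
    rw [card_extVertices_of_const hT hσ hbox hcard hne hi hc]
    have hend : (∃ i ∈ T, (∀ p ∈ σ, p i = a i) ∨ ∀ p ∈ σ, p i = b i) ↔ l i = a i ∨ l i = b i := by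
      refine ⟨?_, fun h => ⟨i, hi, h.imp (fun h p hp => (hc p hp).trans h)
        fun h p hp => (hc p hp).trans h⟩⟩
      rintro ⟨j, hj, h⟩
      obtain rfl | hji := eq_or_ne j i
      · exact h.imp (fun h => h l hl.1) fun h => h l hl.1
      · obtain ⟨p, hp, q, hq, hpq⟩ := exists_ne_of_const hT hσ hbox hcard hi hc hj hji
        exact (h.elim (fun h => hpq (by rw [h p hp, h q hq]))
          fun h => hpq (by rw [h p hp, h q hq])).elim
    have hab := hTlt i hi
    have hal : a i ≤ l i := (mem_Icc.1 (hbox hl.1)).1 i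
    have hlb : l i ≤ b i := (mem_Icc.1 (hbox hl.1)).2 i
    rw [hend]
    split_ifs
    · exact iff_of_false (by decide) (by omega)
    all_goals simp; omega

end Kuhn

section Counting

variable {α β : Type*}

lemma even_card_of_involution {s : Finset α} (g : α → α) (hg : ∀ a ∈ s, g a ∈ s)
    (hgg : ∀ a ∈ s, g (g a) = a) (hne : ∀ a ∈ s, g a ≠ a) : Even #s := by
  rw [← ZMod.natCast_eq_zero_iff_even, card_eq_sum_ones, Nat.cast_sum]
  exact sum_involution (fun a _ => g a) (fun _ _ => by decide) (fun a ha _ => hne a ha) hg hgg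

variable [DecidableEq α] [DecidableEq β]

lemma filter_image_erase_eq_pair {τ : Finset α} {s : Finset β} {f : α → β} (hcard : #τ = #s + 1)
    {p : α} (hp : p ∈ τ) (hps : (τ.erase p).image f = s) (hfp : f p ∈ s) :
    ∃ p' ∈ τ, p' ≠ p ∧ {q ∈ τ | (τ.erase q).image f = s} = {p, p'} := by
  have hinj : Set.InjOn f (τ.erase p : Finset α) := by
    rw [← card_image_iff, hps, card_erase_of_mem hp, hcard, Nat.add_sub_cancel]
  rw [← hps] at hfp
  obtain ⟨p', hp', hpp'⟩ := mem_image.1 hfp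
  obtain ⟨hne, hp'τ⟩ := mem_erase.1 hp'
  refine ⟨p', hp'τ, hne, ?_⟩
  ext q
  simp only [mem_filter, mem_insert, mem_singleton]
  constructor
  · rintro ⟨hq, hqs⟩
    by_contra! hqne
    have hfq : f q ∈ (τ.erase q).image f := by
      rw [hqs, ← hps]
      exact mem_image_of_mem f (mem_erase.2 ⟨hqne.1, hq⟩)
    obtain ⟨r, hr, hrq⟩ := mem_image.1 hfq
    obtain ⟨hrq', hrτ⟩ := mem_erase.1 hr
    by_cases hrp : r = p
    · exact hqne.2 (hinj (mem_erase.2 ⟨hqne.1, hq⟩) hp' (by rw [← hrq, hrp, hpp']))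
    · exact hrq' (hinj (mem_erase.2 ⟨hrp, hrτ⟩) (mem_erase.2 ⟨hqne.1, hq⟩) hrq)
  · rintro (rfl | rfl)
    · exact ⟨hp, hps⟩
    · refine ⟨hp'τ, ?_⟩
      have h1 : (τ.erase q).image f = τ.image f := by
        conv_rhs => rw [← insert_erase hp'τ, image_insert, hpp']
        exact (insert_eq_of_mem (mem_image_of_mem f (mem_erase.2 ⟨hne.symm, hp⟩))).symm
      have h2 : (τ.erase p).image f = τ.image f := by
        conv_rhs => rw [← insert_erase hp, image_insert]
        exact (insert_eq_of_mem hfp).symm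
      rw [h1, ← h2, hps]

lemma odd_card_image_erase_eq_iff {τ : Finset α} {s : Finset β} {f : α → β} (hcard : #τ = #s + 1) :
    Odd #{p ∈ τ | (τ.erase p).image f = s} ↔ s ⊆ τ.image f ∧ #(τ.image f) = #τ := by
  constructor
  · intro hodd
    obtain ⟨p, hp⟩ := card_pos.1 hodd.pos
    obtain ⟨hpτ, hps⟩ := mem_filter.1 hp
    refine ⟨hps ▸ image_subset_image (erase_subset p τ), ?_⟩
    by_cases hfp : f p ∈ s
    · obtain ⟨p', -, hne, hpair⟩ := filter_image_erase_eq_pair hcard hpτ hps hfp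
      rw [hpair, card_pair hne.symm] at hodd
      exact absurd hodd (by decide)
    · rw [← insert_erase hpτ, image_insert, hps, card_insert_of_notMem hfp, insert_erase hpτ, hcard]
  · rintro ⟨hs, himage⟩
    obtain ⟨_, hc, hps⟩ := exists_mem_notMem_of_card_lt_card (show #s < #(τ.image f) by omega)
    obtain ⟨p, hp, rfl⟩ := mem_image.1 hc
    have hpface : (τ.erase p).image f = s := by
      refine (eq_of_subset_of_card_le (fun x hx => ?_) ?_).symm
      · obtain ⟨q, hq, rfl⟩ := mem_image.1 (hs hx)
        exact mem_image_of_mem f (mem_erase.2 ⟨fun h => hps (h ▸ hx), hq⟩)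
      · exact card_image_le.trans (by rw [card_erase_of_mem hp, hcard, Nat.add_sub_cancel])
    have hsingle : {q ∈ τ | (τ.erase q).image f = s} = {p} := by
      refine eq_singleton_iff_unique_mem.2 ⟨mem_filter.2 ⟨hp, hpface⟩, fun q hq => ?_⟩
      by_contra hqp
      exact hps ((mem_filter.1 hq).2 ▸ mem_image_of_mem f (mem_erase.2 ⟨Ne.symm hqp, hp⟩))
    rw [hsingle]
    exact odd_one

end Counting

section Tucker

variable {ι : Type*}

/-- The label opposite to `l`, where the labels `±i` of Tucker's lemma are encoded as `(i, ±1)`. -/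
def antipode (l : ι × ℤˣ) : ι × ℤˣ := (l.1, -l.2)

lemma antipode_antipode (l : ι × ℤˣ) : antipode (antipode l) = l := by simp [antipode]

lemma eq_or_eq_antipode_of_fst_eq {l l' : ι × ℤˣ} (h : l'.1 = l.1) : l' = l ∨ l' = antipode l := by
  obtain ⟨i, ε⟩ := l
  obtain ⟨j, δ⟩ := l'
  obtain rfl : j = i := h
  by_cases hδ : δ = ε
  · exact Or.inl (by rw [hδ])
  · exact Or.inr (by rw [antipode, Int.units_ne_iff_eq_neg.1 hδ])

lemma injOn_fst_of_antipode_notMem {s : Finset (ι × ℤˣ)} (hs : ∀ l ∈ s, antipode l ∉ s) :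
    Set.InjOn Prod.fst (s : Set (ι × ℤˣ)) := fun _ hl l' hl' h =>
  (eq_or_eq_antipode_of_fst_eq h).resolve_right fun h' => hs l' hl' (h' ▸ hl)

variable {N : ℤ} {s : Finset (ι × ℤˣ)} {l : ι × ℤˣ}

section Corner

variable [DecidableEq ι]

/-- The least corner of the face `{x ∈ [-N, N]^ι | every sign of x lies in s}` of the cube. -/
def lowerCorner (N : ℤ) (s : Finset (ι × ℤˣ)) (i : ι) : ℤ := if (i, -1) ∈ s then -N else 0

/-- The greatest corner of the face `{x ∈ [-N, N]^ι | every sign of x lies in s}` of the cube. -/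
def upperCorner (N : ℤ) (s : Finset (ι × ℤˣ)) (i : ι) : ℤ := if (i, 1) ∈ s then N else 0

lemma corner_eq_of_antipode_notMem (hl : l ∈ s) (hanti : antipode l ∉ s) :
    (lowerCorner N s l.1 = 0 ∧ upperCorner N s l.1 = l.2 * N) ∨
      (lowerCorner N s l.1 = l.2 * N ∧ upperCorner N s l.1 = 0) := by
  obtain ⟨i, ε⟩ := l
  rcases Int.units_eq_one_or ε with rfl | rfl <;>
    simp_all [antipode, lowerCorner, upperCorner]

end Corner

variable [Fintype ι]

/-- The pairs `(i, ε)` such that the `i`-th coordinate takes the sign `ε` on `σ`. -/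
def signs (σ : Finset (ι → ℤ)) : Finset (ι × ℤˣ) := {l | ∃ p ∈ σ, 0 < (l.2 : ℤ) * p l.1}

variable {σ τ : Finset (ι → ℤ)} {p : ι → ℤ}

lemma mem_signs : l ∈ signs σ ↔ ∃ p ∈ σ, 0 < (l.2 : ℤ) * p l.1 := by simp [signs]

lemma signs_mono (h : σ ⊆ τ) : signs σ ⊆ signs τ := fun _ hl =>
  let ⟨p, hp, hpl⟩ := mem_signs.1 hl
  mem_signs.2 ⟨p, h hp, hpl⟩

lemma eq_zero_of_forall_notMem_signs {i : ι} (hi : ∀ ε, (i, ε) ∉ signs σ) (hp : p ∈ σ) :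
    p i = 0 := by
  by_contra h
  refine hi (if 0 < p i then 1 else -1) (mem_signs.2 ⟨p, hp, ?_⟩)
  dsimp only
  split_ifs with h'
  · simpa
  · simpa using lt_of_le_of_ne (not_lt.1 h') h

namespace IsKuhn

lemma card_le_card_signs_add_one (hσ : IsKuhn σ) : #σ ≤ #(signs σ) + 1 := by
  classical
  have hzero : ∀ i ∉ (signs σ).image Prod.fst, ∀ p ∈ σ, p i = 0 := fun i hi _ hp =>
    eq_zero_of_forall_notMem_signs (fun _ h => hi (mem_image_of_mem Prod.fst h)) hp
  exact (hσ.card_le_card_add_one fun i hi p hp q hq =>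
    (hzero i hi p hp).trans (hzero i hi q hq).symm).trans (Nat.add_le_add_right card_image_le 1)

lemma card_le_card_signs (hσ : IsKuhn σ) {i : ι} {c : ℤ} (hc : c ≠ 0) (hi : ∀ p ∈ σ, p i = c) :
    #σ ≤ #(signs σ) := by
  classical
  obtain rfl | ⟨p, hp⟩ := σ.eq_empty_or_nonempty
  · simp
  have hzero : ∀ j ∉ (signs σ).image Prod.fst, ∀ p ∈ σ, p j = 0 := fun j hj _ hp =>
    eq_zero_of_forall_notMem_signs (fun _ h => hj (mem_image_of_mem Prod.fst h)) hp
  have himem : i ∈ (signs σ).image Prod.fst := by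
    by_contra h
    exact hc ((hi p hp).symm.trans (hzero i h p hp))
  have h := hσ.card_le_card_add_one (T := ((signs σ).image Prod.fst).erase i)
    fun j hj p hp q hq => by
      by_cases hji : j = i
      · rw [hji, hi p hp, hi q hq]
      · have hj' : j ∉ (signs σ).image Prod.fst := fun h => hj (mem_erase.2 ⟨hji, h⟩)
        rw [hzero j hj' p hp, hzero j hj' q hq]
  rw [card_erase_add_one himem] at h
  exact h.trans card_image_le

end IsKuhn

lemma signs_ne_iff_exists_forall_eq_zero (hs : ∀ l ∈ s, antipode l ∉ s) (hσ : signs σ ⊆ s) :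
    signs σ ≠ s ↔ ∃ l ∈ s, ∀ p ∈ σ, p l.1 = 0 := by
  constructor
  · intro hne
    obtain ⟨l, hl, hlσ⟩ := exists_of_ssubset (hσ.ssubset_of_ne hne)
    refine ⟨l, hl, fun p hp => eq_zero_of_forall_notMem_signs (fun ε hε => ?_) hp⟩
    obtain h | h := eq_or_eq_antipode_of_fst_eq (l' := (l.1, ε)) (l := l) rfl
    · rw [h] at hε
      exact hlσ hε
    · rw [h] at hε
      exact hs l hl (hσ hε)
  · rintro ⟨l, hl, hzero⟩ rfl
    obtain ⟨p, hp, hpos⟩ := mem_signs.1 hl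
    simp [hzero p hp] at hpos

variable [DecidableEq ι]

/-- The lattice points of the cube `[-N, N]^ι`. -/
def cube (N : ℤ) : Finset (ι → ℤ) := Icc (fun _ => -N) fun _ => N

lemma mem_cube : p ∈ cube N ↔ ∀ i, |p i| ≤ N := by
  simp only [cube, mem_Icc, Pi.le_def, abs_le, forall_and]

lemma subset_Icc_corner_iff (hN : 0 ≤ N) :
    σ ⊆ Icc (lowerCorner N s) (upperCorner N s) ↔ σ ⊆ cube N ∧ signs σ ⊆ s := by
  have hcoord : ∀ (p : ι → ℤ) i, lowerCorner N s i ≤ p i ∧ p i ≤ upperCorner N s i ↔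
      |p i| ≤ N ∧ ∀ ε : ℤˣ, 0 < (ε : ℤ) * p i → (i, ε) ∈ s := by
    intro p i
    have hunits : (∀ ε : ℤˣ, 0 < (ε : ℤ) * p i → (i, ε) ∈ s) ↔
        (0 < p i → (i, 1) ∈ s) ∧ (p i < 0 → (i, -1) ∈ s) := by
      refine ⟨fun h => ⟨fun hp => h 1 (by simpa), fun hp => h (-1) (by simpa)⟩, fun h ε => ?_⟩
      rcases Int.units_eq_one_or ε with rfl | rfl
      · simpa using h.1
      · simpa using h.2
    rw [hunits, abs_le, lowerCorner, upperCorner]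
    split_ifs with h1 h2 h2 <;> simp [h1, h2] <;> omega
  constructor
  · intro h
    have hσ := fun p hp i => (hcoord p i).1 ⟨(mem_Icc.1 (h hp)).1 i, (mem_Icc.1 (h hp)).2 i⟩
    refine ⟨fun p hp => mem_cube.2 fun i => (hσ p hp i).1, fun l hl => ?_⟩
    obtain ⟨p, hp, hpl⟩ := mem_signs.1 hl
    exact (hσ p hp l.1).2 l.2 hpl
  · rintro ⟨hcube, hsigns⟩ p hp
    have hp' := fun i => (hcoord p i).2 ⟨mem_cube.1 (hcube hp) i, fun ε hε =>
      hsigns (mem_signs.2 ⟨p, hp, hε⟩)⟩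
    exact mem_Icc.2 ⟨fun i => (hp' i).1, fun i => (hp' i).2⟩

variable (N) (lab : (ι → ℤ) → ι × ℤˣ)

open scoped Classical in
/-- The completely labelled simplices of Freund and Todd's proof of Tucker's lemma: `k` vertices
in the cube carrying `k` distinct labels, which include all signs taken on these vertices. -/
def fullSimplices (k : ℕ) : Finset (Finset (ι → ℤ)) :=
  {σ ∈ (cube N).powersetCard k | IsKuhn σ ∧ #(σ.image lab) = k ∧ signs σ ⊆ σ.image lab}

open scoped Classical in
/-- The `k`-dimensional simplices in the cube taking exactly `k` signs, that is, those which have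
full dimension in their coordinate orthant. -/
def orthantSimplices (k : ℕ) : Finset (Finset (ι → ℤ)) :=
  {τ ∈ (cube N).powersetCard (k + 1) | IsKuhn τ ∧ #(signs τ) = k}

/-- The simplex `σ` lies in a facet `x i = ±N` of the cube `[-N, N]^ι`. -/
def OnBoundary (σ : Finset (ι → ℤ)) : Prop := ∃ i, ∃ ε : ℤˣ, ∀ p ∈ σ, p i = ε * N

variable {N lab} {k : ℕ}

lemma mem_fullSimplices : σ ∈ fullSimplices N lab k ↔
    σ ⊆ cube N ∧ #σ = k ∧ IsKuhn σ ∧ #(σ.image lab) = k ∧ signs σ ⊆ σ.image lab := by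
  simp [fullSimplices, mem_powersetCard, and_assoc]

lemma mem_orthantSimplices :
    τ ∈ orthantSimplices N k ↔ τ ⊆ cube N ∧ #τ = k + 1 ∧ IsKuhn τ ∧ #(signs τ) = k := by
  simp [orthantSimplices, mem_powersetCard, and_assoc]

lemma signs_eq_of_onBoundary (hN : 0 < N) (hσ : σ ∈ fullSimplices N lab k)
    (hbd : OnBoundary N σ) : signs σ = σ.image lab := by
  obtain ⟨-, hcard, hK, hlab, hsigns⟩ := mem_fullSimplices.1 hσ
  obtain ⟨i, ε, hi⟩ := hbd
  refine eq_of_subset_of_card_le hsigns ?_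
  rw [hlab, ← hcard]
  exact hK.card_le_card_signs (mul_ne_zero ε.ne_zero hN.ne') hi

lemma card_orthantSimplices_filter (hN : 0 ≤ N) (hσ : σ ∈ fullSimplices N lab k) :
    #{τ ∈ orthantSimplices N k | σ ⊆ τ ∧ signs τ = σ.image lab} =
      #(extVertices (lowerCorner N (σ.image lab)) (upperCorner N (σ.image lab)) σ) := by
  obtain ⟨hcube, hcard, -, hlab, hsigns⟩ := mem_fullSimplices.1 hσ
  have hbox := (subset_Icc_corner_iff hN).2 ⟨hcube, hsigns⟩
  refine (card_bij (fun p _ => insert p σ) (fun p hp => ?_) (fun p hp q _ h => ?_) ?_).symm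
  · obtain ⟨hp, hpσ, hK⟩ := mem_extVertices.1 hp
    obtain ⟨hcube', hsigns'⟩ := (subset_Icc_corner_iff hN).1 (insert_subset hp hbox)
    have hcard' : #(insert p σ) = k + 1 := by rw [card_insert_of_notMem hpσ, hcard]
    have hle := hK.card_le_card_signs_add_one
    have heq := eq_of_subset_of_card_le hsigns' (by omega)
    exact mem_filter.2 ⟨mem_orthantSimplices.2 ⟨hcube', hcard', hK, by rw [heq, hlab]⟩,
      subset_insert p σ, heq⟩
  · exact (insert_inj (mem_extVertices.1 hp).2.1).1 h
  · intro τ hτ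
    obtain ⟨hτ, hστ, hτlab⟩ := mem_filter.1 hτ
    obtain ⟨hτcube, hτcard, hτK, -⟩ := mem_orthantSimplices.1 hτ
    obtain ⟨p, hpσ, rfl⟩ := exists_eq_insert_iff.2 ⟨hστ, by rw [hcard, hτcard]⟩
    have hτbox := (subset_Icc_corner_iff hN).2 ⟨hτcube, hτlab.subset⟩
    exact ⟨p, mem_extVertices.2 ⟨hτbox (mem_insert_self p σ), hpσ, hτK⟩, rfl⟩

lemma card_fullSimplices_filter (hτ : τ ∈ orthantSimplices N k) :
    #{σ ∈ fullSimplices N lab k | σ ⊆ τ ∧ signs τ = σ.image lab} =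
      #{p ∈ τ | (τ.erase p).image lab = signs τ} := by
  obtain ⟨hcube, hcard, hK, hsigns⟩ := mem_orthantSimplices.1 hτ
  refine (card_bij (fun p _ => τ.erase p) (fun p hp => ?_) (fun p hp q hq h => ?_) ?_).symm
  · obtain ⟨hp, hlab⟩ := mem_filter.1 hp
    have hsub := erase_subset p τ
    refine mem_filter.2 ⟨mem_fullSimplices.2 ⟨hsub.trans hcube, ?_, hK.subset hsub, ?_, ?_⟩,
      hsub, hlab.symm⟩
    · rw [card_erase_of_mem hp, hcard, Nat.add_sub_cancel]
    · rw [hlab, hsigns]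
    · rw [hlab]
      exact signs_mono hsub
  · exact erase_injOn τ (mem_filter.1 hp).1 (mem_filter.1 hq).1 h
  · intro σ hσ
    obtain ⟨hσ, hστ, hτlab⟩ := mem_filter.1 hσ
    obtain ⟨p, hpσ, rfl⟩ := exists_eq_insert_iff.2
      ⟨hστ, by rw [(mem_fullSimplices.1 hσ).2.1, hcard]⟩
    exact ⟨p, mem_filter.2 ⟨mem_insert_self p σ, by rw [erase_insert hpσ, hτlab]⟩,
      erase_insert hpσ⟩

lemma odd_card_fullSimplices_filter_iff (hτ : τ ∈ orthantSimplices N k) :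
    Odd #{σ ∈ fullSimplices N lab k | σ ⊆ τ ∧ signs τ = σ.image lab} ↔
      τ ∈ fullSimplices N lab (k + 1) := by
  obtain ⟨hcube, hcard, hK, hsigns⟩ := mem_orthantSimplices.1 hτ
  rw [card_fullSimplices_filter hτ, odd_card_image_erase_eq_iff (by rw [hcard, hsigns]),
    mem_fullSimplices, hcard, and_comm]
  simp only [hcube, hK, true_and]

section NoComplementaryEdge

variable (hno : ∀ p ∈ cube N, ∀ q ∈ cube N, p ≤ q → q ≤ p + 1 → lab q ≠ antipode (lab p))
include hno

lemma antipode_notMem_image_of_isKuhn (hσ : IsKuhn σ) (hcube : σ ⊆ cube N) (hl : l ∈ σ.image lab) :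
    antipode l ∉ σ.image lab := by
  obtain ⟨p, hp, rfl⟩ := mem_image.1 hl
  intro h
  obtain ⟨q, hq, hqp⟩ := mem_image.1 h
  rcases hσ.1 p hp q hq with hpq | hqp'
  · exact hno p (hcube hp) q (hcube hq) hpq (hσ.2 p hp q hq) hqp
  · exact hno q (hcube hq) p (hcube hp) hqp' (hσ.2 q hq p hp) (by rw [hqp, antipode_antipode])

lemma odd_card_orthantSimplices_filter_iff (hN : 0 < N) (hk : 1 ≤ k)
    (hσ : σ ∈ fullSimplices N lab k) :
    Odd #{τ ∈ orthantSimplices N k | σ ⊆ τ ∧ signs τ = σ.image lab} ↔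
      signs σ ≠ σ.image lab ∨ OnBoundary N σ := by
  obtain ⟨hcube, hcard, hK, hlab, hsigns⟩ := mem_fullSimplices.1 hσ
  have hanti := fun l => antipode_notMem_image_of_isKuhn (l := l) hno hK hcube
  have hbox := (subset_Icc_corner_iff hN.le).2 ⟨hcube, hsigns⟩
  set s := σ.image lab
  rw [card_orthantSimplices_filter hN.le hσ, hK.odd_card_extVertices_iff (T := s.image Prod.fst)
    (fun i hi => ?_) (fun i hi => ?_) hbox ?_ (card_pos.1 (by omega)),
    signs_ne_iff_exists_forall_eq_zero hanti hsigns]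
  · have hends : ∀ l ∈ s, ((∀ p ∈ σ, p l.1 = lowerCorner N s l.1) ∨
        ∀ p ∈ σ, p l.1 = upperCorner N s l.1) ↔
        (∀ p ∈ σ, p l.1 = 0) ∨ ∀ p ∈ σ, p l.1 = l.2 * N := fun l hl => by
      rcases corner_eq_of_antipode_notMem (N := N) hl (hanti l hl) with ⟨h₁, h₂⟩ | ⟨h₁, h₂⟩
      · rw [h₁, h₂]
      · rw [h₁, h₂, or_comm]
    have hbd : OnBoundary N σ ↔ ∃ l ∈ s, ∀ p ∈ σ, p l.1 = l.2 * N := by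
      refine ⟨fun ⟨i, ε, hi⟩ => ⟨(i, ε), hsigns ?_, hi⟩, fun ⟨l, _, hl⟩ => ⟨l.1, l.2, hl⟩⟩
      obtain ⟨p, hp⟩ := card_pos.1 (show 0 < #σ by omega)
      refine mem_signs.2 ⟨p, hp, ?_⟩
      rwa [hi p hp, ← mul_assoc, ← Units.val_mul, Int.units_mul_self, Units.val_one, one_mul]
    rw [hbd, ← exists_or, exists_mem_image]
    refine exists_congr fun l => ?_
    rw [← and_or_left]
    exact and_congr_right (hends l)
  · rw [card_image_of_injOn (injOn_fst_of_antipode_notMem hanti), hcard, hlab]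
  · have hmem : ∀ ε, (i, ε) ∉ s := fun ε h => hi (mem_image_of_mem Prod.fst h)
    simp [lowerCorner, upperCorner, hmem]
  · obtain ⟨l, hl, rfl⟩ := mem_image.1 hi
    have hle : lowerCorner N s l.1 ≤ 0 ∧ 0 ≤ upperCorner N s l.1 := by
      rw [lowerCorner, upperCorner]
      split_ifs <;> omega
    have hne : (l.2 : ℤ) * N ≠ 0 := mul_ne_zero l.2.ne_zero hN.ne'
    rcases corner_eq_of_antipode_notMem (N := N) hl (hanti l hl) with ⟨h₁, h₂⟩ | ⟨h₁, h₂⟩ <;> omega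

open scoped Classical in
lemma odd_card_signs_ne_or_onBoundary_iff (hN : 0 < N) (hk : 1 ≤ k) :
    Odd #{σ ∈ fullSimplices N lab k | signs σ ≠ σ.image lab ∨ OnBoundary N σ} ↔
      Odd #{τ ∈ fullSimplices N lab (k + 1) | signs τ ≠ τ.image lab} := by
  have horthant : {τ ∈ orthantSimplices (ι := ι) N k | τ ∈ fullSimplices N lab (k + 1)} =
      {τ ∈ fullSimplices N lab (k + 1) | signs τ ≠ τ.image lab} := by
    ext τ
    simp only [mem_filter, mem_orthantSimplices, mem_fullSimplices]
    refine ⟨fun ⟨⟨_, _, _, hcard⟩, hτ⟩ => ⟨hτ, fun h => ?_⟩,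
      fun ⟨hτ, hne⟩ => ⟨⟨hτ.1, hτ.2.1, hτ.2.2.1, ?_⟩, hτ⟩⟩
    · rw [h] at hcard
      omega
    · have hlt := card_lt_card (hτ.2.2.2.2.ssubset_of_ne hne)
      have hle := hτ.2.2.1.card_le_card_signs_add_one
      omega
  have hcount := sum_card_bipartiteAbove_eq_sum_card_bipartiteBelow
    (s := fullSimplices N lab k) (t := orthantSimplices N k)
    fun σ τ : Finset (ι → ℤ) => σ ⊆ τ ∧ signs τ = σ.image lab
  rw [← horthant, ← filter_congr fun τ hτ => odd_card_fullSimplices_filter_iff (lab := lab) hτ,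
    ← filter_congr fun σ hσ => odd_card_orthantSimplices_filter_iff hno hN hk hσ,
    ← odd_sum_iff_odd_card_odd, ← odd_sum_iff_odd_card_odd]
  exact iff_of_eq (congrArg Odd hcount)

end NoComplementaryEdge

section Antipodal

variable (hanti : ∀ p ∈ cube N, (∃ i, |p i| = N) → lab (-p) = antipode (lab p))
include hanti

lemma image_neg_mem_fullSimplices (hN : 0 < N) (hσ : σ ∈ fullSimplices N lab k)
    (hbd : OnBoundary N σ) : σ.image Neg.neg ∈ fullSimplices N lab k := by
  obtain ⟨hcube, hcard, hK, hlab, hsigns⟩ := mem_fullSimplices.1 hσ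
  obtain ⟨i, ε, hi⟩ := hbd
  have hlabneg : (σ.image Neg.neg).image lab = (σ.image lab).image antipode := by
    rw [image_image, image_image]
    refine image_congr fun p hp => hanti p (hcube hp) ⟨i, ?_⟩
    rcases Int.units_eq_one_or ε with rfl | rfl <;> simp [hi p hp, abs_of_pos hN]
  refine mem_fullSimplices.2 ⟨?_, ?_, hK.image_neg, ?_, fun l hl => ?_⟩
  · exact image_subset_iff.2 fun p hp => mem_cube.2 fun j => by
      simpa using mem_cube.1 (hcube hp) j
  · rw [card_image_of_injective _ neg_injective, hcard]
  · rw [hlabneg, card_image_of_injective _ (Function.LeftInverse.injective antipode_antipode), hlab]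
  · obtain ⟨_, hp, hpos⟩ := mem_signs.1 hl
    obtain ⟨p, hpσ, rfl⟩ := mem_image.1 hp
    rw [hlabneg, ← antipode_antipode l]
    exact mem_image_of_mem antipode (hsigns (mem_signs.2 ⟨p, hpσ, by simpa [antipode] using hpos⟩))

open scoped Classical in
lemma even_card_onBoundary (hN : 0 < N) (hk : 1 ≤ k) :
    Even #{σ ∈ fullSimplices N lab k | OnBoundary N σ} := by
  refine even_card_of_involution (fun σ => σ.image Neg.neg) (fun σ hσ => ?_)
    (fun σ _ => by simp [image_image]) fun σ hσ heq => ?_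
  · obtain ⟨hσ, hbd⟩ := mem_filter.1 hσ
    refine mem_filter.2 ⟨image_neg_mem_fullSimplices hanti hN hσ hbd, ?_⟩
    obtain ⟨i, ε, hi⟩ := hbd
    exact ⟨i, -ε, forall_mem_image.2 fun p hp => by simp [hi p hp]⟩
  · obtain ⟨hσ, i, ε, hi⟩ := mem_filter.1 hσ
    obtain ⟨p, hp⟩ := card_pos.1 (show 0 < #σ by have := (mem_fullSimplices.1 hσ).2.1; omega)
    have hneg := hi (-p) (heq ▸ mem_image_of_mem Neg.neg hp)
    have hne : (ε : ℤ) * N ≠ 0 := mul_ne_zero ε.ne_zero hN.ne'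
    rw [Pi.neg_apply, hi p hp] at hneg
    omega

end Antipodal

lemma fullSimplices_one_filter_signs_ne (hN : 0 ≤ N) :
    {σ ∈ fullSimplices N lab 1 | signs σ ≠ σ.image lab} = {{0}} := by
  ext σ
  simp only [mem_filter, mem_fullSimplices, mem_singleton]
  constructor
  · rintro ⟨⟨-, hcard, -, hlab, hsigns⟩, hne⟩
    obtain ⟨p, rfl⟩ := card_eq_one.1 hcard
    have hempty : signs {p} = ∅ := by
      have := card_lt_card (hsigns.ssubset_of_ne hne)
      exact card_eq_zero.1 (by omega)
    rw [singleton_inj]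
    funext i
    exact eq_zero_of_forall_notMem_signs (σ := {p}) (by simp [hempty]) (mem_singleton_self p)
  · rintro rfl
    have hsigns : signs ({0} : Finset (ι → ℤ)) = ∅ := by
      ext l
      simp [mem_signs]
    simp [hsigns, IsKuhn.singleton, mem_cube, hN, eq_comm (a := (∅ : Finset (ι × ℤˣ)))]

open scoped Classical in
theorem tucker (hN : 0 < N)
    (hanti : ∀ p ∈ cube N, (∃ i, |p i| = N) → lab (-p) = antipode (lab p)) :
    ∃ p ∈ cube N, ∃ q ∈ cube N, p ≤ q ∧ q ≤ p + 1 ∧ lab q = antipode (lab p) := by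
  by_contra! hno
  have hodd : ∀ k, 1 ≤ k → Odd #{σ ∈ fullSimplices N lab k | signs σ ≠ σ.image lab} := by
    intro k hk
    induction k, hk using Nat.le_induction with
    | base =>
      rw [fullSimplices_one_filter_signs_ne hN.le, card_singleton]
      exact odd_one
    | succ k hk ih =>
      have hdisj : Disjoint {σ ∈ fullSimplices N lab k | signs σ ≠ σ.image lab}
          {σ ∈ fullSimplices N lab k | OnBoundary N σ} :=
        disjoint_filter.2 fun σ hσ hne hbd => hne (signs_eq_of_onBoundary hN hσ hbd)
      rw [← odd_card_signs_ne_or_onBoundary_iff hno hN hk, filter_or, card_union_of_disjoint hdisj]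
      exact ih.add_even (even_card_onBoundary hanti hN hk)
  obtain ⟨σ, hσ⟩ := card_pos.1 (hodd (Fintype.card ι + 1) le_add_self).pos
  obtain ⟨hcube, -, hK, hlab, -⟩ := mem_fullSimplices.1 (mem_filter.1 hσ).1
  have hinj := injOn_fst_of_antipode_notMem fun l =>
    antipode_notMem_image_of_isKuhn (l := l) hno hK hcube
  have hle := (card_image_of_injOn hinj).symm.trans_le (card_le_univ _)
  omega

end Tucker

section BorsukUlam

open Metric

variable {ι κ : Type*}

/-- The point `p / N` of the lattice of mesh `1 / N`. -/
def latticePoint (N : ℕ) (p : ι → ℤ) (i : ι) : ℝ := p i / N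

lemma latticePoint_neg (N : ℕ) (p : ι → ℤ) : latticePoint N (-p) = -latticePoint N p := by
  funext i
  simp [latticePoint, neg_div]

section Hemisphere

variable [Fintype κ] (e : κ ↪ ι)

/-- The point of `ℝ^ι` with coordinates `x` along `e` and `1 - ‖x‖` elsewhere; for `x` in the unit
ball of `ℝ^κ` these points project radially to a hemisphere. -/
def liftHemisphere (x : κ → ℝ) : ι → ℝ := Function.extend e x fun _ => 1 - ‖x‖

lemma continuous_liftHemisphere : Continuous (liftHemisphere e) := by
  refine continuous_pi fun i => ?_
  by_cases hi : ∃ j, e j = i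
  · obtain ⟨j, rfl⟩ := hi
    simpa only [liftHemisphere, e.injective.extend_apply] using continuous_apply j
  · simp only [liftHemisphere, Function.extend_apply' _ _ _ hi]
    fun_prop

lemma liftHemisphere_neg {x : κ → ℝ} (hx : ‖x‖ = 1) :
    liftHemisphere e (-x) = -liftHemisphere e x := by
  funext i
  by_cases hi : ∃ j, e j = i
  · obtain ⟨j, rfl⟩ := hi
    simp [liftHemisphere, e.injective.extend_apply]
  · simp [liftHemisphere, Function.extend_apply' _ _ _ hi, hx]

lemma liftHemisphere_ne_zero [Fintype ι] (h : Fintype.card κ < Fintype.card ι) (x : κ → ℝ) :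
    liftHemisphere e x ≠ 0 := by
  intro h0
  obtain rfl : x = 0 := funext fun j => by
    simpa [liftHemisphere, e.injective.extend_apply] using congrFun h0 (e j)
  obtain ⟨i, hi⟩ : ∃ i, ¬∃ j, e j = i := by
    by_contra! hsurj
    exact h.not_ge (Fintype.card_le_of_surjective e hsurj)
  simpa [liftHemisphere, Function.extend_apply' _ _ _ hi] using congrFun h0 i

end Hemisphere

section DominantLabel

variable [Nonempty ι]

/-- A coordinate at which `v` attains its sup norm, with the sign `v` takes there. As a function
of `|v|` the coordinate is the same for `v` and `-v`. -/
def dominantLabel (v : ι → ℝ) : ι × ℤˣ :=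
  let i := Classical.epsilon fun i => ∀ j, |v j| ≤ |v i|
  (i, if 0 < v i then 1 else -1)

lemma dominantLabel_snd_mul (v : ι → ℝ) :
    ((dominantLabel v).2 : ℤ) * v (dominantLabel v).1 = |v (dominantLabel v).1| := by
  by_cases h : 0 < v (dominantLabel v).1
  · have hsnd : (dominantLabel v).2 = 1 := if_pos h
    simp [hsnd, abs_of_pos h]
  · have hsnd : (dominantLabel v).2 = -1 := if_neg h
    simp [hsnd, abs_of_nonpos (not_lt.1 h)]

lemma abs_le_abs_dominantLabel_fst [Finite ι] (v : ι → ℝ) (j : ι) :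
    |v j| ≤ |v (dominantLabel v).1| :=
  Classical.epsilon_spec (p := fun i => ∀ j, |v j| ≤ |v i|) (Finite.exists_max fun i => |v i|) j

lemma dominantLabel_neg [Finite ι] {v : ι → ℝ} (hv : v ≠ 0) :
    dominantLabel (-v) = antipode (dominantLabel v) := by
  have hfst : (dominantLabel (-v)).1 = (dominantLabel v).1 := by
    simp only [dominantLabel, Pi.neg_apply, abs_neg]
  refine (eq_or_eq_antipode_of_fst_eq hfst).resolve_left fun h => ?_
  obtain ⟨j, hj⟩ := Function.ne_iff.1 hv
  have hneg := dominantLabel_snd_mul (-v)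
  rw [h, Pi.neg_apply, mul_neg, dominantLabel_snd_mul v, abs_neg] at hneg
  linarith [abs_pos.2 hj, abs_le_abs_dominantLabel_fst v j]

variable [Fintype ι]

lemma abs_dominantLabel_fst (v : ι → ℝ) : |v (dominantLabel v).1| = ‖v‖ :=
  le_antisymm (norm_le_pi_norm v _)
    ((pi_norm_le_iff_of_nonneg (abs_nonneg _)).2 (abs_le_abs_dominantLabel_fst v))

lemma norm_add_norm_le_dist_of_dominantLabel_eq {v w : ι → ℝ}
    (h : dominantLabel w = antipode (dominantLabel v)) : ‖v‖ + ‖w‖ ≤ dist v w := by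
  have hv := (dominantLabel_snd_mul v).trans (abs_dominantLabel_fst v)
  have hw := (dominantLabel_snd_mul w).trans (abs_dominantLabel_fst w)
  rw [h] at hw
  calc ‖v‖ + ‖w‖ = ((dominantLabel v).2 : ℤ) * (v - w) (dominantLabel v).1 := by
        rw [← hv, ← hw]
        simp only [antipode, Units.val_neg, Int.cast_neg, Pi.sub_apply]
        ring
    _ ≤ |(v - w) (dominantLabel v).1| := by
        rcases Int.units_eq_one_or (dominantLabel v).2 with hε | hε
        · simpa [hε] using le_abs_self (v (dominantLabel v).1 - w (dominantLabel v).1)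
        · simpa [hε] using neg_le_abs (v (dominantLabel v).1 - w (dominantLabel v).1)
    _ ≤ dist v w := by
        rw [dist_eq_norm]
        exact norm_le_pi_norm (v - w) _

end DominantLabel

variable [Fintype ι]

lemma norm_latticePoint_le_one {N : ℕ} (hN : 0 < N) {p : ι → ℤ} (hp : ∀ i, |p i| ≤ N) :
    ‖latticePoint N p‖ ≤ 1 := by
  refine (pi_norm_le_iff_of_nonneg zero_le_one).2 fun i => ?_
  rw [latticePoint, Real.norm_eq_abs, abs_div, Nat.abs_cast, div_le_one (by exact_mod_cast hN)]
  exact_mod_cast hp i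

lemma norm_latticePoint_eq_one {N : ℕ} (hN : 0 < N) {p : ι → ℤ} (hp : ∀ i, |p i| ≤ N)
    {i : ι} (hi : |p i| = N) : ‖latticePoint N p‖ = 1 := by
  refine le_antisymm (norm_latticePoint_le_one hN hp) ?_
  have hN' : (N : ℝ) ≠ 0 := by exact_mod_cast hN.ne'
  have habs : ‖latticePoint N p i‖ = 1 := by
    rw [latticePoint, Real.norm_eq_abs, abs_div, Nat.abs_cast, ← Int.cast_abs, hi,
      Int.cast_natCast, div_self hN']
  exact habs ▸ norm_le_pi_norm (latticePoint N p) i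

lemma dist_latticePoint_le {N : ℕ} {p q : ι → ℤ} (hpq : p ≤ q) (hqp : q ≤ p + 1) :
    dist (latticePoint N p) (latticePoint N q) ≤ 1 / N := by
  refine (dist_pi_le_iff (by positivity)).2 fun i => ?_
  have hsub : |p i - q i| ≤ 1 := by
    have h₁ : p i ≤ q i := hpq i
    have h₂ : q i ≤ p i + 1 := hqp i
    rw [abs_le]
    omega
  rw [Real.dist_eq, latticePoint, latticePoint, ← sub_div, abs_div, Nat.abs_cast]
  gcongr
  exact_mod_cast hsub

theorem exists_mem_closedBall_eq_zero_of_odd {f : (ι → ℝ) → ι → ℝ}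
    (hf : ContinuousOn f (closedBall 0 1)) (hodd : ∀ x ∈ sphere 0 1, f (-x) = -f x) :
    ∃ x ∈ closedBall 0 1, f x = 0 := by
  classical
  obtain hι | hι := isEmpty_or_nonempty ι
  · exact ⟨0, mem_closedBall_self zero_le_one, Subsingleton.elim _ _⟩
  by_contra! hne
  obtain ⟨x₀, hx₀, hmin⟩ := (isCompact_closedBall (0 : ι → ℝ) 1).exists_isMinOn
    (nonempty_closedBall.2 zero_le_one) hf.norm
  have hδ : 0 < ‖f x₀‖ := norm_pos_iff.2 (hne x₀ hx₀)
  obtain ⟨η, hη, hfη⟩ := Metric.uniformContinuousOn_iff.1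
    ((isCompact_closedBall (0 : ι → ℝ) 1).uniformContinuousOn_of_continuous hf) ‖f x₀‖ hδ
  obtain ⟨M, hM⟩ := exists_nat_one_div_lt hη
  set N := M + 1
  have hN : 0 < N := M.succ_pos
  have hball : ∀ p ∈ cube (ι := ι) N, latticePoint N p ∈ closedBall (0 : ι → ℝ) 1 := fun p hp =>
    mem_closedBall_zero_iff.2 (norm_latticePoint_le_one hN (mem_cube.1 hp))
  obtain ⟨p, hp, q, hq, hpq, hqp, hlabel⟩ := tucker (N := N)
    (lab := fun p => dominantLabel (f (latticePoint N p))) (by exact_mod_cast hN)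
    fun p hp ⟨i, hi⟩ => by
      rw [latticePoint_neg, hodd _ (mem_sphere_zero_iff_norm.2
        (norm_latticePoint_eq_one hN (mem_cube.1 hp) hi)), dominantLabel_neg (hne _ (hball p hp))]
  have hdist : dist (latticePoint N p) (latticePoint N q) < η :=
    (dist_latticePoint_le hpq hqp).trans_lt (by simpa [N] using hM)
  have hclose := hfη _ (hball p hp) _ (hball q hq) hdist
  have hfar := norm_add_norm_le_dist_of_dominantLabel_eq hlabel
  have hminp : ‖f x₀‖ ≤ ‖f (latticePoint N p)‖ := hmin (hball p hp)
  linarith [norm_nonneg (f (latticePoint N q))]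

theorem borsuk_ulam [Fintype κ] (h : Fintype.card κ < Fintype.card ι) {g : (ι → ℝ) → κ → ℝ}
    (hg : ContinuousOn g (sphere 0 1)) (hodd : ∀ x ∈ sphere 0 1, g (-x) = -g x) :
    ∃ x ∈ sphere 0 1, g x = 0 := by
  obtain ⟨e⟩ := Function.Embedding.nonempty_of_card_le h.le
  set f : (κ → ℝ) → ι → ℝ := fun x => ‖liftHemisphere e x‖⁻¹ • liftHemisphere e x
  have hne := liftHemisphere_ne_zero e h
  have hsphere : ∀ x, f x ∈ sphere (0 : ι → ℝ) 1 := fun x =>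
    mem_sphere_zero_iff_norm.2 (norm_smul_inv_norm (𝕜 := ℝ) (hne x))
  have hcont : Continuous f := (continuous_norm.comp (continuous_liftHemisphere e)).inv₀
    (fun x => norm_ne_zero_iff.2 (hne x)) |>.smul (continuous_liftHemisphere e)
  obtain ⟨x, -, hx⟩ := exists_mem_closedBall_eq_zero_of_odd (f := g ∘ f)
    (hg.comp hcont.continuousOn fun x _ => hsphere x) fun x hx => by
      have hfneg : f (-x) = -f x := by
        simp only [f, liftHemisphere_neg e (mem_sphere_zero_iff_norm.1 hx), norm_neg, smul_neg]
      rw [Function.comp_apply, Function.comp_apply, hfneg, hodd _ (hsphere x)]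
  exact ⟨f x, hsphere x, hx⟩

end BorsukUlam

section Minimax

open Metric

variable {A : Set (Fin n → ℝ)} {Phi : (Fin n → ℝ) → ℝ} {k : ℕ} {c : ℝ}

lemma exists_forall_mem_eq_zero_of_genusGe (hA : GenusGe A k) {T : Finset (Fin n)} (hT : #T < k) :
    ∃ x ∈ A, ∀ v ∈ T, x v = 0 := by
  by_contra! hne
  refine hT.not_ge (hA #T ⟨fun x i => x (T.equivFin.symm i), by fun_prop, fun _ _ => rfl,
    fun x hx h0 => ?_⟩)
  obtain ⟨v, hv, hxv⟩ := hne x hx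
  exact hxv (by simpa using congrFun h0 (T.equivFin ⟨v, hv⟩))

variable {L : (Fin k → ℝ) →ₗ[ℝ] Fin n → ℝ}

lemma genusGe_image_sphere : GenusGe (L '' sphere 0 1) k := by
  rintro m ⟨f, hf, hodd, hne⟩
  by_contra! hmk
  have hL : Continuous L := L.continuous_of_finiteDimensional
  obtain ⟨a, ha, hfa⟩ := borsuk_ulam (by simpa using hmk)
    (hf.comp hL.continuousOn (Set.mapsTo_image L (sphere 0 1))) fun a ha => by
      rw [Function.comp_apply, Function.comp_apply, map_neg,
        hodd _ (Set.mem_image_of_mem L ha)]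
  exact hne _ (Set.mem_image_of_mem L ha) hfa

lemma neg_mem_image_sphere {x : Fin n → ℝ} (hx : x ∈ L '' sphere 0 1) : -x ∈ L '' sphere 0 1 := by
  obtain ⟨a, ha, rfl⟩ := hx
  exact ⟨-a, by simpa using ha, map_neg L a⟩

lemma zero_notMem_image_sphere (hL : Function.Injective L) :
    (0 : Fin n → ℝ) ∉ L '' sphere 0 1 := by
  rintro ⟨a, ha, ha0⟩
  exact ne_zero_of_mem_unit_sphere ⟨a, ha⟩ ((map_eq_zero_iff L hL).1 ha0)

lemma minimaxVal_le (hPhi : ∀ x, 0 ≤ Phi x) (hk : 0 < k) (hL : Function.Injective L)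
    (hc : ∀ a ≠ 0, Phi (L a) ≤ c) : minimaxVal Phi k ≤ c := by
  have hle : minimaxVal Phi k ≤ sSup (Phi '' (L '' sphere 0 1)) := by
    refine csInf_le ⟨0, ?_⟩ ⟨_, (isCompact_sphere 0 1).image L.continuous_of_finiteDimensional,
      fun x hx => neg_mem_image_sphere hx, zero_notMem_image_sphere hL, genusGe_image_sphere, rfl⟩
    rintro _ ⟨B, -, -, -, -, rfl⟩
    exact Real.sSup_nonneg (Set.forall_mem_image.2 fun x _ => hPhi x)
  have : Nonempty (Fin k) := ⟨⟨0, hk⟩⟩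
  refine hle.trans (csSup_le (((NormedSpace.sphere_nonempty.2 zero_le_one).image L).image Phi) ?_)
  rintro _ ⟨_, ⟨a, ha, rfl⟩, rfl⟩
  exact hc a (ne_zero_of_mem_unit_sphere ⟨a, ha⟩)

lemma le_minimaxVal (hPhi : BddAbove (Set.range Phi)) (hk : k ≤ n)
    (hc : ∀ A : Set (Fin n → ℝ), 0 ∉ A → GenusGe A k → ∃ x ∈ A, c ≤ Phi x) :
    c ≤ minimaxVal Phi k := by
  refine le_csInf ?_ ?_
  · have hL : Function.Injective (Function.ExtendByZero.linearMap ℝ (Fin.castLE hk)) :=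
      Function.extend_injective (Fin.castLE_injective hk) 0
    exact ⟨_, _, (isCompact_sphere 0 1).image (LinearMap.continuous_of_finiteDimensional _),
      fun x hx => neg_mem_image_sphere hx, zero_notMem_image_sphere hL, genusGe_image_sphere, rfl⟩
  · rintro _ ⟨A, -, -, h0, hgenus, rfl⟩
    obtain ⟨x, hx, hcx⟩ := hc A h0 hgenus
    exact hcx.trans (le_csSup (hPhi.mono (Set.image_subset_range Phi A)) ⟨x, hx, rfl⟩)

end Minimax

section Signless

variable (G : SimpleGraph (Fin n)) [DecidableRel G.Adj] (x : Fin n → ℝ) (P Q : Finset (Fin n))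

/-- The norm `∑ d_i |x_i|`, the denominator of the Rayleigh quotient of `Δ₁⁺`. -/
def degNorm : ℝ := ∑ i, degR G i * |x i|

lemma degR_eq_sum (i : Fin n) : degR G i = ∑ j, if G.Adj i j then 1 else 0 := by
  rw [degR, ← SimpleGraph.card_neighborFinset_eq_degree, SimpleGraph.neighborFinset_eq_filter,
    card_filter]
  push_cast
  rfl

lemma sum_sum_adj_left :
    ∑ i, ∑ j, (if G.Adj i j then x i else 0) = ∑ i, degR G i * x i := by
  simp only [degR_eq_sum, sum_mul, ite_mul, one_mul, zero_mul]

lemma sum_sum_adj_right :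
    ∑ i, ∑ j, (if G.Adj i j then x j else 0) = ∑ i, degR G i * x i := by
  rw [sum_comm, ← sum_sum_adj_left]
  simp only [G.adj_comm]

lemma iplusU_nonneg : 0 ≤ IplusU G x :=
  div_nonneg (sum_nonneg fun i _ => sum_nonneg fun j _ => by split_ifs <;> positivity) zero_le_two

lemma iplusU_add_le (y : Fin n → ℝ) : IplusU G (x + y) ≤ IplusU G x + IplusU G y := by
  simp only [IplusU, ← add_div, ← sum_add_distrib]
  gcongr with i _ j _
  split_ifs
  · rw [Pi.add_apply, Pi.add_apply, add_add_add_comm]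
    exact abs_add_le _ _
  · simp

lemma iplusU_smul (c : ℝ) : IplusU G (c • x) = |c| * IplusU G x := by
  simp only [IplusU, Pi.smul_apply, smul_eq_mul, ← mul_add, abs_mul, mul_div_assoc', mul_sum,
    mul_ite, mul_zero]

lemma degNorm_nonneg : 0 ≤ degNorm G x :=
  sum_nonneg fun _ _ => mul_nonneg (Nat.cast_nonneg _) (abs_nonneg _)

lemma iplusU_le_degNorm : IplusU G x ≤ degNorm G x := by
  have h : ∑ i, ∑ j, (if G.Adj i j then |x i + x j| else 0) ≤ degNorm G x + degNorm G x := by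
    rw [degNorm]
    nth_rewrite 1 [← sum_sum_adj_left]
    rw [← sum_sum_adj_right]
    simp only [← sum_add_distrib]
    gcongr with i _ j _
    split_ifs
    · exact abs_add_le _ _
    · simp
  rw [IplusU]
  linarith

lemma rayleighPlus_nonneg : 0 ≤ RayleighPlus G x :=
  div_nonneg (iplusU_nonneg G x) (degNorm_nonneg G x)

lemma rayleighPlus_le_one : RayleighPlus G x ≤ 1 :=
  div_le_one_of_le₀ (iplusU_le_degNorm G x) (degNorm_nonneg G x)

variable {G} in
lemma degR_pos (hiso : ∀ i, 0 < G.degree i) (i : Fin n) : 0 < degR G i := Nat.cast_pos.2 (hiso i)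

variable {G P} in
lemma volF_pos (hiso : ∀ i, 0 < G.degree i) (hP : P.Nonempty) : 0 < volF G P :=
  sum_pos (fun i _ => degR_pos hiso i) hP

variable {G x} in
lemma degNorm_pos (hiso : ∀ i, 0 < G.degree i) (hx : x ≠ 0) : 0 < degNorm G x := by
  obtain ⟨i, hi⟩ := Function.ne_iff.1 hx
  exact sum_pos' (fun j _ => mul_nonneg (degR_pos hiso j).le (abs_nonneg _))
    ⟨i, mem_univ i, mul_pos (degR_pos hiso i) (abs_pos.2 hi)⟩

/-- The signed indicator `1_P - 1_Q` of a pair of disjoint sets. -/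
def signedIndicator (v : Fin n) : ℝ := if v ∈ P then 1 else if v ∈ Q then -1 else 0

lemma abs_signedIndicator (v : Fin n) : |signedIndicator P Q v| = if v ∈ P ∪ Q then 1 else 0 := by
  by_cases hP : v ∈ P <;> by_cases hQ : v ∈ Q <;> simp [signedIndicator, hP, hQ]

lemma degNorm_signedIndicator : degNorm G (signedIndicator P Q) = volF G (P ∪ Q) := by
  simp only [degNorm, abs_signedIndicator, volF, mul_ite, mul_one, mul_zero]
  rw [sum_ite_mem, univ_inter]

lemma cutE_eq_sum :
    cutE G P Q = ∑ i, ∑ j, if G.Adj i j then (if i ∈ P ∧ j ∈ Q then 1 else 0) else 0 := by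
  rw [cutE, ← univ_inter P, ← sum_ite_mem]
  refine sum_congr rfl fun i _ => ?_
  by_cases hi : i ∈ P
  · rw [if_pos hi, ← univ_inter Q, ← sum_ite_mem]
    refine sum_congr rfl fun j _ => ?_
    by_cases hj : j ∈ Q <;> simp [hj, hi]
  · simp [hi]

lemma cutE_comm : cutE G P Q = cutE G Q P := by
  rw [cutE, sum_comm]
  simp only [G.adj_comm, cutE]

variable {P Q}

lemma abs_signedIndicator_add (h : Disjoint P Q) (i j : Fin n) :
    |signedIndicator P Q i + signedIndicator P Q j| =
      |signedIndicator P Q i| + |signedIndicator P Q j| -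
        2 * ((if i ∈ P ∧ j ∈ Q then 1 else 0) + if i ∈ Q ∧ j ∈ P then 1 else 0) := by
  have hi : i ∈ P → i ∉ Q := fun hP => disjoint_left.1 h hP
  have hj : j ∈ P → j ∉ Q := fun hP => disjoint_left.1 h hP
  unfold signedIndicator
  by_cases hiP : i ∈ P <;> by_cases hiQ : i ∈ Q <;> by_cases hjP : j ∈ P <;>
    by_cases hjQ : j ∈ Q <;> simp_all <;> norm_num

lemma iplusU_signedIndicator (h : Disjoint P Q) :
    IplusU G (signedIndicator P Q) = volF G (P ∪ Q) - 2 * cutE G P Q := by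
  have hsum : ∑ i, ∑ j, (if G.Adj i j then |signedIndicator P Q i + signedIndicator P Q j| else 0) =
      volF G (P ∪ Q) + volF G (P ∪ Q) - 2 * (cutE G P Q + cutE G Q P) := by
    rw [← degNorm_signedIndicator, degNorm]
    nth_rewrite 1 [← sum_sum_adj_left]
    rw [← sum_sum_adj_right, cutE_eq_sum, cutE_eq_sum]
    simp only [mul_sum, ← sum_add_distrib, ← sum_sub_distrib]
    refine sum_congr rfl fun i _ => sum_congr rfl fun j _ => ?_
    by_cases hij : G.Adj i j
    · simp only [hij, if_true, abs_signedIndicator_add h]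
    · simp [hij]
  rw [IplusU, hsum, cutE_comm G Q P]
  ring

end Signless

section BlockMap

variable {κ : Type*}

/-- The admissible families in the definition of the dual Cheeger constants: pairs `(P i, Q i)` with
all the sets involved pairwise disjoint and no `P i ∪ Q i` empty. -/
structure IsAdmissible (P Q : κ → Finset (Fin n)) : Prop where
  disjoint : ∀ i, Disjoint (P i) (Q i)
  disjoint_union : ∀ i j, i ≠ j → Disjoint (P i ∪ Q i) (P j ∪ Q j)
  nonempty : ∀ i, (P i ∪ Q i).Nonempty

variable [Fintype κ] (P Q : κ → Finset (Fin n))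

/-- The linear map with values `∑ a_i (1_{P i} - 1_{Q i})`. -/
def blockMap : (κ → ℝ) →ₗ[ℝ] Fin n → ℝ :=
  Fintype.linearCombination ℝ fun i => signedIndicator (P i) (Q i)

lemma blockMap_apply (a : κ → ℝ) (v : Fin n) :
    blockMap P Q a v = ∑ i, a i * signedIndicator (P i) (Q i) v := by
  simp [blockMap, Fintype.linearCombination_apply]

variable {P Q} (h : IsAdmissible P Q)
include h

lemma IsAdmissible.blockMap_apply_of_mem (a : κ → ℝ) {i : κ} {v : Fin n} (hv : v ∈ P i ∪ Q i) :
    blockMap P Q a v = a i * signedIndicator (P i) (Q i) v := by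
  rw [blockMap_apply]
  refine sum_eq_single i (fun j _ hji => ?_) fun hi => absurd (mem_univ i) hi
  have hvj : v ∉ P j ∪ Q j := disjoint_left.1 (h.disjoint_union i j hji.symm) hv
  rw [abs_eq_zero.1 ((abs_signedIndicator _ _ v).trans (if_neg hvj)), mul_zero]

lemma IsAdmissible.abs_blockMap (a : κ → ℝ) (v : Fin n) :
    |blockMap P Q a v| = ∑ i, |a i| * |signedIndicator (P i) (Q i) v| := by
  by_cases hv : ∃ i, v ∈ P i ∪ Q i
  · obtain ⟨i, hv⟩ := hv
    rw [h.blockMap_apply_of_mem a hv, abs_mul, eq_comm]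
    refine sum_eq_single i (fun j _ hji => ?_) fun hi => absurd (mem_univ i) hi
    rw [abs_signedIndicator, if_neg (disjoint_left.1 (h.disjoint_union i j hji.symm) hv), mul_zero]
  · have hzero : ∀ i, signedIndicator (P i) (Q i) v = 0 := fun i =>
      abs_eq_zero.1 ((abs_signedIndicator _ _ v).trans (if_neg fun hvi => hv ⟨i, hvi⟩))
    simp [blockMap_apply, hzero]

lemma IsAdmissible.blockMap_injective : Function.Injective (blockMap P Q) := by
  intro a b hab
  funext i
  obtain ⟨v, hv⟩ := h.nonempty i
  have hne : signedIndicator (P i) (Q i) v ≠ 0 := by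
    rw [← abs_ne_zero, abs_signedIndicator, if_pos hv]
    exact one_ne_zero
  refine mul_right_cancel₀ hne ?_
  rw [← h.blockMap_apply_of_mem a hv, hab, h.blockMap_apply_of_mem b hv]

variable (G : SimpleGraph (Fin n)) [DecidableRel G.Adj]

lemma IsAdmissible.degNorm_blockMap (a : κ → ℝ) :
    degNorm G (blockMap P Q a) = ∑ i, |a i| * volF G (P i ∪ Q i) := by
  simp only [degNorm, h.abs_blockMap, ← degNorm_signedIndicator, mul_sum]
  rw [sum_comm]
  simp only [mul_left_comm]

lemma IsAdmissible.iplusU_blockMap_le (a : κ → ℝ) : IplusU G (blockMap P Q a) ≤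
    ∑ i, |a i| * (volF G (P i ∪ Q i) - 2 * cutE G (P i) (Q i)) := by
  calc IplusU G (blockMap P Q a) ≤ ∑ i, |a i| * IplusU G (signedIndicator (P i) (Q i)) := by
        rw [blockMap, Fintype.linearCombination_apply]
        refine (le_sum_of_subadditive (IplusU G) ?_ (iplusU_add_le G) univ _).trans_eq ?_
        · simpa using (iplusU_smul G 0 0).le
        · simp only [iplusU_smul]
    _ = _ := by simp only [iplusU_signedIndicator G (h.disjoint _)]

variable {G}

lemma IsAdmissible.rayleighPlus_blockMap_le (hiso : ∀ i, 0 < G.degree i) {a : κ → ℝ} (ha : a ≠ 0) :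
    RayleighPlus G (blockMap P Q a) ≤ 1 - ⨅ i, 2 * cutE G (P i) (Q i) / volF G (P i ∪ Q i) := by
  set r := ⨅ i, 2 * cutE G (P i) (Q i) / volF G (P i ∪ Q i)
  have hr : ∀ i, r * volF G (P i ∪ Q i) ≤ 2 * cutE G (P i) (Q i) := fun i =>
    (le_div_iff₀ (volF_pos hiso (h.nonempty i))).1 (ciInf_le (Set.finite_range _).bddBelow i)
  have hne : blockMap P Q a ≠ 0 := fun h0 => ha ((map_eq_zero_iff _ h.blockMap_injective).1 h0)
  refine (div_le_iff₀ (degNorm_pos hiso hne)).2 ?_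
  calc IplusU G (blockMap P Q a)
      ≤ ∑ i, |a i| * (volF G (P i ∪ Q i) - 2 * cutE G (P i) (Q i)) := h.iplusU_blockMap_le G a
    _ ≤ ∑ i, |a i| * ((1 - r) * volF G (P i ∪ Q i)) := by
        gcongr with i
        linarith [hr i]
    _ = (1 - r) * degNorm G (blockMap P Q a) := by
        rw [h.degNorm_blockMap, mul_sum]
        simp only [mul_left_comm]

end BlockMap

section UpperBound

variable {k : ℕ} {G : SimpleGraph (Fin n)} [DecidableRel G.Adj]

lemma ckSignless_le_one_sub_dualCheeger (hiso : ∀ i, 0 < G.degree i) (hk : 0 < k) (hkn : k ≤ n) :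
    ckSignless G k ≤ 1 - dualCheeger G k := by
  rw [le_sub_comm]
  refine csSup_le ⟨_, fun i => {Fin.castLE hkn i}, fun _ => ∅, fun _ => disjoint_empty_right _,
    fun i j hij => ?_, fun _ => ?_, rfl⟩ ?_
  · simpa using hij
  · simp
  · rintro _ ⟨P, Q, hdisj, hunion, hne, rfl⟩
    have h : IsAdmissible P Q := ⟨hdisj, hunion, hne⟩
    rw [le_sub_comm]
    exact minimaxVal_le (rayleighPlus_nonneg G) hk h.blockMap_injective fun a ha =>
      h.rayleighPlus_blockMap_le hiso ha

end UpperBound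

section Piercing

variable {V : Type*} {G : SimpleGraph V}

lemma exists_subsingleton_neighborSet_inter (hG : G.IsAcyclic) {U : Finset V} (hU : U.Nonempty) :
    ∃ v ∈ U, (G.neighborSet v ∩ U).Subsingleton := by
  have : Nonempty (U : Set V) := hU.to_subtype
  obtain ⟨v, w, p, hp, hmax⟩ := SimpleGraph.Walk.exists_isPath_forall_isPath_length_le_length
    (G.induce (U : Set V))
  have hsnd : ∀ a, (G.induce (U : Set V)).Adj v a → a = p.snd := by
    refine fun a hva => (hG.induce _).eq_snd_of_adj_start hp hva ?_
    by_contra ha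
    exact (Nat.lt_succ_self p.length).not_ge (hmax _ _ (p.cons hva.symm) (hp.cons ha))
  refine ⟨v, v.2, ?_⟩
  rintro a ⟨hva, ha⟩ b ⟨hvb, hb⟩
  exact congrArg Subtype.val ((hsnd ⟨a, ha⟩ hva).trans (hsnd ⟨b, hb⟩ hvb).symm)

lemma exists_ssubset_forall_not_adj {S : Finset V} (hS : ¬(G.induce (S : Set V)).Preconnected) :
    ∃ A ⊂ S, A.Nonempty ∧ ∀ a ∈ A, ∀ b ∈ S, b ∉ A → ¬G.Adj a b := by
  classical
  simp only [SimpleGraph.Preconnected, not_forall] at hS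
  obtain ⟨u, w, huw⟩ := hS
  refine ⟨S.filter fun a => ∃ ha : a ∈ S, (G.induce (S : Set V)).Reachable u ⟨a, ha⟩,
    ⟨filter_subset _ _, fun h => ?_⟩, ⟨u, mem_filter.2 ⟨u.2, u.2, .rfl⟩⟩,
    fun a ha b hb hbA hab => ?_⟩
  · exact huw (mem_filter.1 (h w.2)).2.2
  · obtain ⟨haS, hua⟩ := (mem_filter.1 ha).2
    have hadj : (G.induce (S : Set V)).Adj ⟨a, haS⟩ ⟨b, hb⟩ := hab
    exact hbA (mem_filter.2 ⟨hb, hb, hua.trans hadj.reachable⟩)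

/-- The packing condition: `F` has `k` pairwise disjoint members. -/
def HasPacking (F : Set (Finset V)) (k : ℕ) : Prop :=
  ∃ f : Fin k → Finset V, (∀ i, f i ∈ F) ∧ Pairwise (Function.onFun Disjoint f)

/-- The piercing condition: some set of fewer than `k` points meets every member of `F`. -/
def HasPiercing (F : Set (Finset V)) (k : ℕ) : Prop :=
  ∃ T : Finset V, #T < k ∧ ∀ S ∈ F, ∃ v ∈ T, v ∈ S

variable {F : Set (Finset V)} {v : V} {k : ℕ}

lemma HasPacking.succ (h : HasPacking {S ∈ F | v ∉ S} k) (hv : {v} ∈ F) :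
    HasPacking F (k + 1) := by
  obtain ⟨f, hf, hdisj⟩ := h
  refine ⟨Fin.cons {v} f, Fin.cases hv fun i => (hf i).1, ?_⟩
  have hvf : ∀ i, Disjoint {v} (f i) := fun i => disjoint_singleton_left.2 (hf i).2
  rintro i j hij
  cases i using Fin.cases <;> cases j using Fin.cases
  · exact absurd rfl hij
  · exact hvf _
  · exact (hvf _).symm
  · exact hdisj fun h => hij (congrArg Fin.succ h)

lemma HasPiercing.succ (h : HasPiercing {S ∈ F | v ∉ S} k) : HasPiercing F (k + 1) := by
  classical
  obtain ⟨T, hT, hTF⟩ := h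
  refine ⟨insert v T, (card_insert_le v T).trans_lt (Nat.succ_lt_succ hT), fun S hS => ?_⟩
  by_cases hvS : v ∈ S
  · exact ⟨v, mem_insert_self v T, hvS⟩
  · obtain ⟨w, hw, hwS⟩ := hTF S ⟨hS, hvS⟩
    exact ⟨w, mem_insert_of_mem hw, hwS⟩

section Erase

variable [DecidableEq V]

lemma preconnected_induce_erase {S : Finset V} (hS : (G.induce (S : Set V)).Preconnected)
    (hv : (G.neighborSet v ∩ S).Subsingleton) :
    (G.induce (S.erase v : Set V)).Preconnected := by
  have h : ((G.induce (S : Set V)).induce {a | a.1 ≠ v}).Preconnected := by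
    refine hS.induce_of_degree_eq_one fun a ha b hb c hc => Subtype.ext ?_
    obtain rfl : a.1 = v := not_not.1 ha
    exact hv ⟨hb, b.2⟩ ⟨hc, c.2⟩
  refine h.map (⟨fun a => ⟨a.1, mem_erase.2 ⟨a.2, a.1.2⟩⟩, fun hab => hab⟩ : _ →g _) fun a => ?_
  have ha := mem_erase.1 a.2
  exact ⟨⟨⟨a, ha.2⟩, ha.1⟩, rfl⟩

lemma exists_mem_erase_adj {S : Finset V} (hS : (G.induce (S : Set V)).Preconnected)
    (hne : S ≠ {v}) (hv : v ∈ S) : ∃ a ∈ S.erase v, G.Adj v a := by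
  have : Nontrivial (S : Set V) := ((eq_singleton_or_nontrivial hv).resolve_left hne).coe_sort
  obtain ⟨a, ha⟩ := hS.exists_adj_of_nontrivial ⟨v, hv⟩
  exact ⟨a, mem_erase.2 ⟨fun h => G.irrefl (h ▸ ha : G.Adj v v), a.2⟩, ha⟩

lemma disjoint_of_disjoint_erase {U S S' : Finset V}
    (hv : (G.neighborSet v ∩ U).Subsingleton) (hSU : S ⊆ U) (hSU' : S' ⊆ U)
    (hS : (G.induce (S : Set V)).Preconnected) (hS' : (G.induce (S' : Set V)).Preconnected)
    (hne : S ≠ {v}) (hne' : S' ≠ {v}) (h : Disjoint (S.erase v) (S'.erase v)) : Disjoint S S' := by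
  have hvSS' : ¬(v ∈ S ∧ v ∈ S') := by
    rintro ⟨hvS, hvS'⟩
    obtain ⟨a, ha, hva⟩ := exists_mem_erase_adj hS hne hvS
    obtain ⟨b, hb, hvb⟩ := exists_mem_erase_adj hS' hne' hvS'
    obtain rfl : a = b :=
      hv ⟨hva, hSU (mem_of_mem_erase ha)⟩ ⟨hvb, hSU' (mem_of_mem_erase hb)⟩
    exact disjoint_left.1 h ha hb
  refine disjoint_left.2 fun a ha ha' => ?_
  have hav : a ≠ v := by
    rintro rfl
    exact hvSS' ⟨ha, ha'⟩
  exact disjoint_left.1 h (mem_erase.2 ⟨hav, ha⟩) (mem_erase.2 ⟨hav, ha'⟩)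

lemma connected_induce_erase {S : Finset V} (hS : (G.induce (S : Set V)).Connected)
    (hv : (G.neighborSet v ∩ S).Subsingleton) (hne : S ≠ {v}) :
    (G.induce (S.erase v : Set V)).Connected := by
  refine (SimpleGraph.connected_iff _).2
    ⟨preconnected_induce_erase hS.preconnected hv, Set.Nonempty.to_subtype (coe_nonempty.2 ?_)⟩
  by_cases hvS : v ∈ S
  · exact (erase_nonempty hvS).2 ((eq_singleton_or_nontrivial hvS).resolve_left hne)
  · rw [erase_eq_of_notMem hvS]
    exact coe_nonempty.1 (Set.nonempty_coe_sort.1 hS.nonempty)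

lemma HasPiercing.of_erase (h : HasPiercing ((fun S => S.erase v) '' F) k) : HasPiercing F k := by
  obtain ⟨T, hT, hTF⟩ := h
  refine ⟨T, hT, fun S hS => ?_⟩
  obtain ⟨w, hw, hwS⟩ := hTF _ ⟨S, hS, rfl⟩
  exact ⟨w, hw, mem_of_mem_erase hwS⟩

lemma HasPacking.of_erase {U : Finset V} (h : HasPacking ((fun S => S.erase v) '' F) k)
    (hFU : ∀ S ∈ F, S ⊆ U) (hF : ∀ S ∈ F, (G.induce (S : Set V)).Preconnected)
    (hv : (G.neighborSet v ∩ U).Subsingleton) (hvF : {v} ∉ F) : HasPacking F k := by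
  obtain ⟨f, hf, hdisj⟩ := h
  choose g hgF hgf using hf
  have hne : ∀ i, g i ≠ {v} := fun i hi => hvF (hi ▸ hgF i)
  refine ⟨g, hgF, fun i j hij => disjoint_of_disjoint_erase hv (hFU _ (hgF i)) (hFU _ (hgF j))
    (hF _ (hgF i)) (hF _ (hgF j)) (hne i) (hne j) ?_⟩
  simpa only [hgf] using hdisj hij

end Erase

theorem hasPacking_or_hasPiercing (hG : G.IsAcyclic) {U : Finset V} (hFU : ∀ S ∈ F, S ⊆ U)
    (hF : ∀ S ∈ F, (G.induce (S : Set V)).Connected) : HasPacking F k ∨ HasPiercing F k := by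
  classical
  induction U using Finset.strongInduction generalizing F k with | H U ih => ?_
  obtain _ | k := k
  · exact .inl ⟨Fin.elim0, fun i => i.elim0, fun i => i.elim0⟩
  obtain rfl | hU := U.eq_empty_or_nonempty
  · refine .inr ⟨∅, k.succ_pos, fun S hS => ?_⟩
    obtain ⟨a⟩ := (hF S hS).nonempty
    exact absurd (hFU S hS a.2) (notMem_empty _)
  obtain ⟨v, hvU, hv⟩ := exists_subsingleton_neighborSet_inter hG hU
  by_cases hvF : {v} ∈ F
  · exact (ih (U.erase v) (erase_ssubset hvU) (F := {S ∈ F | v ∉ S}) (k := k)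
      (fun S hS => subset_erase.2 ⟨hFU S hS.1, hS.2⟩) fun S hS => hF S hS.1).imp
      (fun h => h.succ hvF) HasPiercing.succ
  · have hvS : ∀ S ∈ F, (G.neighborSet v ∩ S).Subsingleton := fun S hS =>
      hv.anti (Set.inter_subset_inter_right _ (coe_subset.2 (hFU S hS)))
    refine (ih (U.erase v) (erase_ssubset hvU) (F := (fun S => S.erase v) '' F) (k := k + 1)
      ?_ ?_).imp (fun h => h.of_erase hFU (fun S hS => (hF S hS).preconnected) hv hvF)
      HasPiercing.of_erase
    · rintro _ ⟨S, hS, rfl⟩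
      exact erase_subset_erase v (hFU S hS)
    · rintro _ ⟨S, hS, rfl⟩
      exact connected_induce_erase (hF S hS) (hvS S hS) fun h => hvF (h ▸ hS)

end Piercing

section Coarea

variable (G : SimpleGraph (Fin n)) [DecidableRel G.Adj] (t : ℝ)

/-- The total variation of `y` along the edges of `G`, minus `t` times its weighted norm. On a
bipartite graph it is the sign-switched form of `I⁺ - t ∑ d_i |x_i|`. -/
def variationExcess (y : Fin n → ℝ) : ℝ :=
  (∑ i, ∑ j, if G.Adj i j then |y i - y j| else 0) / 2 - t * degNorm G y

lemma variationExcess_smul (c : ℝ) (y : Fin n → ℝ) :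
    variationExcess G t (c • y) = |c| * variationExcess G t y := by
  simp only [variationExcess, degNorm, Pi.smul_apply, smul_eq_mul, ← mul_sub, abs_mul,
    mul_left_comm _ |c|]
  simp only [← mul_sum, ← mul_ite_zero]
  ring

lemma variationExcess_zero : variationExcess G t 0 = 0 := by
  simpa using variationExcess_smul G t 0 0

variable {G t}

lemma variationExcess_eq_add {y a b : Fin n → ℝ}
    (hsub : ∀ i j, G.Adj i j → |y i - y j| = |a i - a j| + |b i - b j|)
    (habs : ∀ i, |y i| = |a i| + |b i|) :
    variationExcess G t y = variationExcess G t a + variationExcess G t b := by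
  have hvar : ∑ i, ∑ j, (if G.Adj i j then |y i - y j| else 0) =
      ∑ i, ∑ j, (if G.Adj i j then |a i - a j| else 0) +
        ∑ i, ∑ j, if G.Adj i j then |b i - b j| else 0 := by
    simp only [← sum_add_distrib]
    refine sum_congr rfl fun i _ => sum_congr rfl fun j _ => ?_
    split_ifs with h
    · exact hsub i j h
    · exact (add_zero 0).symm
  simp only [variationExcess, degNorm, hvar, habs, mul_add, sum_add_distrib]
  ring

lemma variationExcess_eq_add_truncate {m : ℝ} (hm : 0 ≤ m) (y : Fin n → ℝ) :
    variationExcess G t y = variationExcess G t (fun i => min (y i) m) +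
      variationExcess G t fun i => max (y i) m - m := by
  refine variationExcess_eq_add (fun i j _ => ?_) fun i => ?_
  · rcases le_total (y i) m with hi | hi <;> rcases le_total (y j) m with hj | hj <;>
      simp only [hi, hj, min_eq_left, min_eq_right, max_eq_left, max_eq_right] <;> grind
  · rcases le_total (y i) m with hi | hi <;>
      simp only [hi, min_eq_left, min_eq_right, max_eq_left, max_eq_right] <;> grind

lemma variationExcess_indicator_eq_add {A S : Finset (Fin n)} (hAS : A ⊆ S)
    (hadj : ∀ a ∈ A, ∀ b ∈ S, b ∉ A → ¬G.Adj a b) :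
    variationExcess G t ((S : Set (Fin n)).indicator 1) =
      variationExcess G t ((A : Set (Fin n)).indicator 1) +
        variationExcess G t (((S \ A : Finset (Fin n)) : Set (Fin n)).indicator 1) := by
  refine variationExcess_eq_add (fun i j hij => ?_) fun i => ?_
  · have hi := @hAS i
    have hj := @hAS j
    have hij' := fun hi hj hjA => hadj i hi j hj hjA hij
    have hji' := fun hj hi hiA => hadj j hj i hi hiA hij.symm
    simp only [Set.indicator_apply, mem_coe, mem_sdiff, Pi.one_apply]
    by_cases hiA : i ∈ A <;> by_cases hjA : j ∈ A <;> by_cases hiS : i ∈ S <;>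
      by_cases hjS : j ∈ S <;> simp_all
  · have hi := @hAS i
    by_cases hiA : i ∈ A <;> by_cases hiS : i ∈ S <;> simp_all

lemma exists_subset_connected_variationExcess_neg {S : Finset (Fin n)}
    (hS : variationExcess G t ((S : Set (Fin n)).indicator 1) < 0) :
    ∃ S' ⊆ S, (G.induce (S' : Set (Fin n))).Connected ∧
      variationExcess G t ((S' : Set (Fin n)).indicator 1) < 0 := by
  obtain ⟨S', hS', hmin⟩ := exists_minimal_le_of_wellFoundedLT
    (fun S : Finset (Fin n) => variationExcess G t ((S : Set (Fin n)).indicator 1) < 0) S hS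
  refine ⟨S', hS', (SimpleGraph.connected_iff _).2 ⟨?_, ?_⟩, hmin.prop⟩
  · by_contra hconn
    obtain ⟨A, hAS, hA, hadj⟩ := exists_ssubset_forall_not_adj hconn
    have h := hmin.prop
    rw [variationExcess_indicator_eq_add hAS.1 hadj] at h
    exact (add_nonneg (not_lt.1 (hmin.not_prop_of_lt hAS))
      (not_lt.1 (hmin.not_prop_of_lt (sdiff_ssubset hAS.1 hA)))).not_gt h
  · refine Set.Nonempty.to_subtype (coe_nonempty.2 (nonempty_iff_ne_empty.2 ?_))
    rintro rfl
    have h := hmin.prop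
    rw [coe_empty, Set.indicator_empty'] at h
    exact h.ne (variationExcess_zero G t)

variable {T : Finset (Fin n)}
  (hT : ∀ S : Finset (Fin n), (∀ v ∈ T, v ∉ S) →
    0 ≤ variationExcess G t ((S : Set (Fin n)).indicator 1))
include hT

lemma variationExcess_nonneg_of_nonneg {y : Fin n → ℝ} (hy : ∀ i, 0 ≤ y i)
    (hyT : ∀ v ∈ T, y v = 0) : 0 ≤ variationExcess G t y := by
  induction hS : univ.filter (fun i => y i ≠ 0) using Finset.strongInduction generalizing y with
  | H S ih => ?_
  have hmem : ∀ i, i ∈ S ↔ y i ≠ 0 := fun i => by simp [← hS]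
  obtain rfl | hne := S.eq_empty_or_nonempty
  · have hy0 : y = 0 := funext fun i => by simpa using hmem i
    rw [hy0, variationExcess_zero]
  obtain ⟨i₀, hi₀, hmin⟩ := S.exists_min_image y hne
  have hlayer : (fun i => min (y i) (y i₀)) = y i₀ • (S : Set (Fin n)).indicator 1 := by
    funext i
    by_cases hi : i ∈ S
    · simp [hi, hmin i hi]
    · simp [hi, not_not.1 (mt (hmem i).2 hi), hy i₀]
  rw [variationExcess_eq_add_truncate (hy i₀), hlayer, variationExcess_smul]
  refine add_nonneg (mul_nonneg (abs_nonneg _) (hT S fun v hv hvS => (hmem v).1 hvS (hyT v hv)))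
    (ih _ ?_ (fun i => sub_nonneg.2 (le_max_right _ _)) (fun v hv => ?_) rfl)
  · refine (ssubset_iff_of_subset fun i hi => ?_).2 ⟨i₀, hi₀, by simp⟩
    by_contra hiS
    rw [hmem, not_not] at hiS
    simp [hiS, hy i₀] at hi
  · rw [hyT v hv, max_eq_right (hy i₀), sub_self]

lemma variationExcess_nonneg {y : Fin n → ℝ} (hyT : ∀ v ∈ T, y v = 0) :
    0 ≤ variationExcess G t y := by
  have hneg : (fun i => min (y i) 0) = (-1 : ℝ) • fun i => max (-y i) 0 := by
    funext i
    rw [Pi.smul_apply, neg_one_smul, ← min_neg_neg, neg_neg, neg_zero]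
  rw [variationExcess_eq_add_truncate le_rfl, hneg, variationExcess_smul]
  refine add_nonneg (mul_nonneg (abs_nonneg _) (variationExcess_nonneg_of_nonneg hT
    (fun i => le_max_right _ _) fun v hv => ?_)) (variationExcess_nonneg_of_nonneg hT
    (fun i => sub_nonneg.2 (le_max_right _ _)) fun v hv => ?_)
  · rw [hyT v hv, neg_zero, max_self]
  · rw [hyT v hv, max_self, sub_self]

end Coarea

section LowerBound

variable {k : ℕ} {G : SimpleGraph (Fin n)} [DecidableRel G.Adj]

lemma variationExcess_coloring_smul (C : G.Coloring ℤˣ) (t : ℝ) (x : Fin n → ℝ) :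
    variationExcess G t (fun i => C i • x i) = IplusU G x - t * degNorm G x := by
  have habs : ∀ i (a : ℝ), |C i • a| = |a| := fun i a => by
    obtain h | h := Int.units_eq_one_or (C i) <;> simp [h]
  simp only [variationExcess, IplusU, degNorm, habs]
  congr 2
  refine sum_congr rfl fun i _ => sum_congr rfl fun j _ => ?_
  split_ifs with hij
  · rw [← habs j (x i + x j), Int.units_ne_iff_eq_neg.1 (C.valid hij), smul_add, Units.neg_smul,
      ← neg_add', abs_neg]
  · rfl

lemma variationExcess_indicator (C : G.Coloring ℤˣ) (t : ℝ) (S : Finset (Fin n)) :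
    variationExcess G t ((S : Set (Fin n)).indicator 1) =
      volF G S - 2 * cutE G {i ∈ S | C i = 1} {i ∈ S | C i ≠ 1} - t * volF G S := by
  have hS : (S : Set (Fin n)).indicator 1 =
      fun i => C i • signedIndicator {i ∈ S | C i = 1} {i ∈ S | C i ≠ 1} i := by
    funext i
    by_cases hi : i ∈ S <;> obtain h | h := Int.units_eq_one_or (C i) <;>
      simp [signedIndicator, hi, h]
  rw [hS, variationExcess_coloring_smul,
    iplusU_signedIndicator G (disjoint_filter_filter_not S S _), degNorm_signedIndicator,
    filter_union_filter_not_eq]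

lemma IsAdmissible.iInf_le_dualCheeger {P Q : Fin k → Finset (Fin n)} (h : IsAdmissible P Q)
    (hiso : ∀ i, 0 < G.degree i) (hk : 0 < k) :
    ⨅ i, 2 * cutE G (P i) (Q i) / volF G (P i ∪ Q i) ≤ dualCheeger G k := by
  refine le_csSup ⟨1, ?_⟩ ⟨P, Q, h.disjoint, h.disjoint_union, h.nonempty, rfl⟩
  rintro _ ⟨P, Q, hdisj, -, hne, rfl⟩
  refine (ciInf_le (Set.finite_range _).bddBelow ⟨0, hk⟩).trans ?_
  rw [div_le_one (volF_pos hiso (hne _))]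
  linarith [iplusU_signedIndicator G (hdisj ⟨0, hk⟩),
    iplusU_nonneg G (signedIndicator (P ⟨0, hk⟩) (Q ⟨0, hk⟩))]

lemma exists_variationExcess_indicator_nonneg (C : G.Coloring ℤˣ) (hiso : ∀ i, 0 < G.degree i)
    (hk : 0 < k) {f : Fin k → Finset (Fin n)} (hne : ∀ i, (f i).Nonempty)
    (hf : Pairwise (Function.onFun Disjoint f)) :
    ∃ i, 0 ≤ variationExcess G (1 - dualCheeger G k) ((f i : Set (Fin n)).indicator 1) := by
  set P : Fin k → Finset (Fin n) := fun i => {v ∈ f i | C v = 1}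
  set Q : Fin k → Finset (Fin n) := fun i => {v ∈ f i | C v ≠ 1}
  have hPQ : ∀ i, P i ∪ Q i = f i := fun i => filter_union_filter_not_eq _ _
  have h : IsAdmissible P Q := ⟨fun i => disjoint_filter_filter_not _ _ _,
    fun i j hij => by simpa only [hPQ] using hf hij, fun i => by simpa only [hPQ] using hne i⟩
  have : Nonempty (Fin k) := ⟨⟨0, hk⟩⟩
  obtain ⟨i, hi⟩ := exists_eq_ciInf_of_finite
    (f := fun i => 2 * cutE G (P i) (Q i) / volF G (P i ∪ Q i))
  have hle := hi.trans_le (h.iInf_le_dualCheeger hiso hk)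
  rw [hPQ, div_le_iff₀ (volF_pos hiso (hne i))] at hle
  refine ⟨i, ?_⟩
  rw [variationExcess_indicator C]
  linarith

lemma exists_card_lt_variationExcess_nonneg (hforest : G.IsAcyclic) (hiso : ∀ i, 0 < G.degree i)
    (C : G.Coloring ℤˣ) (hk : 0 < k) : ∃ T : Finset (Fin n), #T < k ∧
      ∀ y : Fin n → ℝ, (∀ v ∈ T, y v = 0) → 0 ≤ variationExcess G (1 - dualCheeger G k) y := by
  obtain ⟨f, hf, hdisj⟩ | ⟨T, hTk, hT⟩ := hasPacking_or_hasPiercing (k := k) hforest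
    (F := {S | (G.induce (S : Set (Fin n))).Connected ∧
      variationExcess G (1 - dualCheeger G k) ((S : Set (Fin n)).indicator 1) < 0})
    (fun S _ => subset_univ S) fun S hS => hS.1
  · have hne : ∀ i, (f i).Nonempty := fun i =>
      coe_nonempty.1 (Set.nonempty_coe_sort.1 (hf i).1.nonempty)
    obtain ⟨i, hi⟩ := exists_variationExcess_indicator_nonneg C hiso hk hne hdisj
    exact absurd hi (hf i).2.not_ge
  · refine ⟨T, hTk, fun y hy => variationExcess_nonneg (fun S hS => ?_) hy⟩
    by_contra! hneg
    obtain ⟨S', hS', hconn⟩ := exists_subset_connected_variationExcess_neg hneg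
    obtain ⟨v, hvT, hvS'⟩ := hT S' hconn
    exact hS v hvT (hS' hvS')

lemma one_sub_dualCheeger_le_ckSignless (hforest : G.IsAcyclic) (hiso : ∀ i, 0 < G.degree i)
    (hk : 0 < k) (hkn : k ≤ n) : 1 - dualCheeger G k ≤ ckSignless G k := by
  have C : G.Coloring ℤˣ := hforest.colorable_two.toColoring (by simp)
  obtain ⟨T, hTk, hT⟩ := exists_card_lt_variationExcess_nonneg hforest hiso C hk
  refine le_minimaxVal ⟨1, Set.forall_mem_range.2 (rayleighPlus_le_one G)⟩ hkn fun A h0 hA => ?_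
  obtain ⟨x, hxA, hxT⟩ := exists_forall_mem_eq_zero_of_genusGe hA hTk
  have hx := hT (fun i => C i • x i) fun v hv => by rw [hxT v hv, smul_zero]
  rw [variationExcess_coloring_smul] at hx
  have hx0 : x ≠ 0 := fun h => h0 (h ▸ hxA)
  exact ⟨x, hxA, (le_div_iff₀ (degNorm_pos hiso hx0)).2 (sub_nonneg.1 hx)⟩

end LowerBound

theorem stmt10 (G : SimpleGraph (Fin n)) [DecidableRel G.Adj]
    (hforest : G.IsAcyclic) (hiso : ∀ i, 0 < G.degree i) :
    ∀ k : ℕ, 1 ≤ k → k ≤ n → ckSignless G k = 1 - dualCheeger G k := fun _ hk hkn =>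
  le_antisymm (ckSignless_le_one_sub_dualCheeger hiso hk hkn)
    (one_sub_dualCheeger_le_ckSignless hforest hiso hk hkn)
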